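/- arXiv:1405.2615 — 5 statements merged into one kernel-verified Lean document; each statement's English description precedes it below -/
import Mathlib

section
/- Let m be a positive integer and n a positive even integer. Let à be the complex matrix whose rows and columns are indexed by the vertices (a,b) of the m-by-n grid (1 ≤ a ≤ m, 1 ≤ b ≤ n), with entry Ã[(a,b),(c,d)] equal to 1 if b = d and |a − c| = 1 (a horizontal edge), equal to i if a = c and |b − d| = 1 (a vertical edge), and equal to 0 otherwise. Then det à = N(m,n)², where N(m,n) is the number of perfect matchings of the m-by-n grid graph; in particular det à is a nonnegative real number. -/
open Complex

/-- The m-by-n grid graph on vertex set `Fin m × Fin n`: two vertices are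
adjacent iff they differ by exactly 1 in one coordinate and agree in the other. -/
def gridGraph (m n : ℕ) : SimpleGraph (Fin m × Fin n) :=
  SimpleGraph.fromRel (fun p q =>
    (p.1 = q.1 ∧ p.2.val + 1 = q.2.val) ∨ (p.2 = q.2 ∧ p.1.val + 1 = q.1.val))

/-- The number of perfect matchings of a graph. -/
noncomputable def numPerfectMatchings {V : Type*} (G : SimpleGraph V) : ℕ :=
  {M : G.Subgraph | M.IsPerfectMatching}.ncard

/-- Kasteleyn's weighted adjacency matrix of the m-by-n grid graph: the entry
indexed by vertices (a,b), (c,d) is 1 if b = d and |a - c| = 1 (horizontal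
edge), is i if a = c and |b - d| = 1 (vertical edge), and is 0 otherwise. -/
def kasteleynMatrix (m n : ℕ) : Matrix (Fin m × Fin n) (Fin m × Fin n) ℂ :=
  fun p q =>
    if p.2 = q.2 ∧ (p.1.val + 1 = q.1.val ∨ q.1.val + 1 = p.1.val) then 1
    else if p.1 = q.1 ∧ (p.2.val + 1 = q.2.val ∨ q.2.val + 1 = p.2.val) then Complex.I
    else 0

/-!
The grid is bipartite, so the permutations along its edges, which index the nonzero terms of the
determinant, correspond to pairs of perfect matchings, and it suffices that each such term is `1`.

Enumerate the vertices column by column and draw each matching of the pair as arcs above a line. The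
sign of the permutation `σ` is the product of the directions of the steps from `v` to `σ v` and of
the parities of the numbers of crossings of the two matchings: this is checked on pairs of edges. As
steps have length `1` or `n`, an arc `{v, v + n}` is crossed by exactly the arcs which start before
`v` and end after it. All other arcs starting before `v` have both their ends there, so the
number of crossings is `v` modulo `2`, and the sign of `σ` becomes a product of signs of its single
steps. For even `n` this product agrees with the product of the entries of the Kasteleyn matrix,
which is seen by rescaling rows and columns.
-/

namespace Kasteleyn

open Finset Equiv

section Symmetrization

variable {V M : Type*} [CommMonoid M]

lemma prod_prod_congr_of_mul_swap (s : Finset V) {u v : V → V → M}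
    (hdiag : ∀ x ∈ s, u x x = v x x)
    (hswap : ∀ x ∈ s, ∀ y ∈ s, x ≠ y → u x y * u y x = v x y * v y x) :
    ∏ x ∈ s, ∏ y ∈ s, u x y = ∏ x ∈ s, ∏ y ∈ s, v x y := by
  classical
  induction s using Finset.induction_on with
  | empty => rfl
  | insert a s ha ih =>
    have expand (w : V → V → M) : ∏ x ∈ insert a s, ∏ y ∈ insert a s, w x y =
        w a a * (∏ x ∈ s, w a x * w x a) * ∏ x ∈ s, ∏ y ∈ s, w x y := by
      simp only [prod_insert ha, prod_mul_distrib, mul_assoc]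
    rw [expand, expand, hdiag a (mem_insert_self a s),
      ih (fun x hx ↦ hdiag x (mem_insert_of_mem hx))
        fun x hx y hy ↦ hswap x (mem_insert_of_mem hx) y (mem_insert_of_mem hy)]
    congr 2
    exact prod_congr rfl fun x hx ↦ hswap a (mem_insert_self a s) x (mem_insert_of_mem hx)
      (ne_of_mem_of_not_mem hx ha).symm

/-- The product of `u` over the four pairs formed by an element of `{x, f x}` and an element of
`{y, f y}`: for a perfect matching `f`, the contribution of a pair of edges to a double product over
all vertices. -/
def edgePairProd (f : V → V) (u : V → V → M) (x y : V) : M :=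
  (u x y * u x (f y)) * (u (f x) y * u (f x) (f y))

lemma edgePairProd_congr {f g : V → V} {u : V → V → M} {x y : V} (hx : f x = g x) (hy : f y = g y) :
    edgePairProd f u x y = edgePairProd g u x y := by
  simp only [edgePairProd, hx, hy]

variable [Fintype V] {f : V → V} {B : Finset V}

lemma prod_compl_eq_prod_comp [DecidableEq V] (hf : f.Injective) (hfB : ∀ v, f v ∈ B ↔ v ∉ B)
    (h : V → M) : ∏ v ∈ Bᶜ, h v = ∏ v ∈ B, h (f v) := by
  have image_eq : B.image f = Bᶜ := by
    ext w
    obtain ⟨v, rfl⟩ := (Finite.injective_iff_surjective.mp hf) w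
    simp [hf.eq_iff, hfB]
  rw [← image_eq, prod_image hf.injOn]

lemma prod_eq_prod_mul_comp (hf : f.Injective) (hfB : ∀ v, f v ∈ B ↔ v ∉ B) (h : V → M) :
    ∏ v, h v = ∏ v ∈ B, h v * h (f v) := by
  classical
  rw [prod_mul_distrib, ← prod_compl_eq_prod_comp hf hfB, prod_mul_prod_compl]

lemma prod_prod_eq_prod_prod_edgePairProd (hf : f.Injective) (hfB : ∀ v, f v ∈ B ↔ v ∉ B)
    (u : V → V → M) : ∏ x, ∏ y, u x y = ∏ x ∈ B, ∏ y ∈ B, edgePairProd f u x y := by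
  simp only [prod_eq_prod_mul_comp hf hfB, edgePairProd, prod_mul_distrib]

end Symmetrization

section Sign

variable {V : Type*} {N : ℕ} (e : V ≃ Fin N)

/-- The sign `1` or `-1` of the ordered pair `(u, v)`, according to whether `u` precedes `v` in the
enumeration `e`. -/
def orderSign (u v : V) : ℤˣ := if e u < e v then 1 else -1

/-- The sign `-1` if the pair `(u, v)` is an inversion of `σ` with respect to the enumeration `e`,
and `1` otherwise. -/
def inversionSign (σ : Perm V) (u v : V) : ℤˣ :=
  if e u < e v ∧ e (σ v) < e (σ u) then -1 else 1

/-- The sign `-1` if, with respect to the enumeration `e`, the arcs from `u` to `f u` and from `v`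
to `f v` cross in the order `u < v < f u < f v`, and `1` otherwise. For an involution `f`, each pair
of crossing arcs is seen exactly once as `(u, v)` varies. -/
def crossingSign (f : V → V) (u v : V) : ℤˣ :=
  if e u < e v ∧ e v < e (f u) ∧ e (f u) < e (f v) then -1 else 1

variable {e}

lemma inversionSign_mul_swap (σ : Perm V) {u v : V} (huv : u ≠ v) :
    inversionSign e σ u v * inversionSign e σ v u = orderSign e u v * orderSign e (σ u) (σ v) := by
  have hne : e u ≠ e v := e.injective.ne huv
  have hne' : e (σ u) ≠ e (σ v) := e.injective.ne (σ.injective.ne huv)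
  unfold inversionSign orderSign
  rcases hne.lt_or_gt with h | h <;> rcases hne'.lt_or_gt with h' | h' <;>
    simp [h, h', h.not_gt, h'.not_gt]

lemma edgePairProd_inversionSign_self (σ : Perm V) {v : V} (hv : v ≠ σ v) :
    edgePairProd σ (inversionSign e σ) v v =
      orderSign e v (σ v) * orderSign e (σ v) (σ (σ v)) := by
  rw [← inversionSign_mul_swap σ hv]
  simp [edgePairProd, inversionSign]

lemma edgePairProd_inversionSign_mul_swap (σ : Perm V) {u v : V} (huv : u ≠ v) (huσv : u ≠ σ v)
    (hσuv : σ u ≠ v) :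
    edgePairProd σ (inversionSign e σ) u v * edgePairProd σ (inversionSign e σ) v u =
      edgePairProd σ (orderSign e) u v * edgePairProd σ (orderSign e) (σ u) (σ v) := by
  have h₁ := inversionSign_mul_swap (e := e) σ huv
  have h₂ := inversionSign_mul_swap (e := e) σ huσv
  have h₃ := inversionSign_mul_swap (e := e) σ hσuv
  have h₄ := inversionSign_mul_swap (e := e) σ (σ.injective.ne huv)
  simp only [edgePairProd]
  grind

/-- Both sides are `-1` exactly when the arcs `{u, f u}` and `{v, f v}` cross. -/
lemma edgePairProd_crossingSign_mul_swap {f : V → V} {u v : V} (hu : f (f u) = u)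
    (hv : f (f v) = v) (huv : u ≠ v) (hufv : u ≠ f v) :
    edgePairProd f (crossingSign e f) u v * edgePairProd f (crossingSign e f) v u =
      edgePairProd f (orderSign e) u v := by
  have h₁ : e u ≠ e v := e.injective.ne huv
  have h₂ : e u ≠ e (f v) := e.injective.ne hufv
  have h₃ : e (f u) ≠ e v := e.injective.ne fun h ↦ hufv (by rw [← h, hu])
  have h₄ : e (f u) ≠ e (f v) := e.injective.ne fun h ↦ huv (by rw [← hu, h, hv])
  simp only [edgePairProd, crossingSign, orderSign, hu, hv]
  generalize e u = a, e (f u) = a', e v = b, e (f v) = b' at *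
  rcases h₁.lt_or_gt with h₁ | h₁ <;> rcases h₂.lt_or_gt with h₂ | h₂ <;>
    rcases h₃.lt_or_gt with h₃ | h₃ <;> rcases h₄.lt_or_gt with h₄ | h₄ <;>
    simp [h₁, h₂, h₃, h₄, h₁.not_gt, h₂.not_gt, h₃.not_gt, h₄.not_gt]

lemma edgePairProd_crossingSign_self {f : V → V} {v : V} (hv : f (f v) = v) :
    edgePairProd f (crossingSign e f) v v = 1 := by
  simp [edgePairProd, crossingSign, hv]

variable [Fintype V] [DecidableEq V]

lemma sign_eq_prod_prod_inversionSign (e : V ≃ Fin N) (σ : Perm V) :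
    Perm.sign σ = ∏ u, ∏ v, inversionSign e σ u v := by
  rw [← Perm.sign_permCongr e σ, Perm.sign_eq_prod_prod_Ioi, ← e.prod_comp]
  refine prod_congr rfl fun u _ ↦ ?_
  rw [← filter_lt_eq_Ioi, prod_filter, ← e.prod_comp]
  refine prod_congr rfl fun v _ ↦ ?_
  by_cases h : e u < e v
  · have hne : e (σ u) ≠ e (σ v) := by simpa using fun huv ↦ h.ne (congrArg e huv)
    rcases hne.lt_or_gt with h' | h' <;> simp [inversionSign, h, h', h'.not_gt]
  · simp [inversionSign, h]

end Sign

section Pairing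

variable {V : Type*} [DecidableEq V] {σ : Perm V} {B : Finset V} {v : V}

/-- The perfect matching which pairs each element `v` of `B` with `σ v`, as a self-map of `V`. It is
meant for permutations `σ` which exchange `B` and its complement. -/
def pairing (σ : Perm V) (B : Finset V) (v : V) : V := if v ∈ B then σ v else σ.symm v

lemma pairing_of_mem (hv : v ∈ B) : pairing σ B v = σ v := if_pos hv

lemma pairing_of_notMem (hv : v ∉ B) : pairing σ B v = σ.symm v := if_neg hv

lemma pairing_mem_iff (hσ : ∀ v, σ v ∈ B ↔ v ∉ B) (v : V) : pairing σ B v ∈ B ↔ v ∉ B := by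
  by_cases hv : v ∈ B
  · rw [pairing_of_mem hv, hσ]
  · have := hσ (σ.symm v)
    rw [σ.apply_symm_apply] at this
    rw [pairing_of_notMem hv]
    tauto

lemma involutive_pairing (hσ : ∀ v, σ v ∈ B ↔ v ∉ B) : (pairing σ B).Involutive := by
  intro v
  have hmem := pairing_mem_iff hσ v
  by_cases hv : v ∈ B
  · rw [pairing_of_notMem (by tauto), pairing_of_mem hv, σ.symm_apply_apply]
  · rw [pairing_of_mem (by tauto), pairing_of_notMem hv, σ.apply_symm_apply]

variable [Fintype V] {N : ℕ}

theorem sign_eq_prod_orderSign_mul_prod_crossingSign (e : V ≃ Fin N)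
    (hσ : ∀ v, σ v ∈ B ↔ v ∉ B) :
    Perm.sign σ = (∏ v, orderSign e v (σ v)) *
      ((∏ u, ∏ v, crossingSign e (pairing σ B) u v) *
        ∏ u, ∏ v, crossingSign e (pairing σ Bᶜ) u v) := by
  set f := pairing σ B
  set g := pairing σ Bᶜ
  have hσ' (v : V) : σ v ∈ Bᶜ ↔ v ∉ Bᶜ := by simp [hσ]
  have hff : f.Involutive := involutive_pairing hσ
  have hgg : g.Involutive := involutive_pairing hσ'
  have hfσ {x : V} (hx : x ∈ B) : σ x = f x := (pairing_of_mem hx).symm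
  have hgσ {x : V} (hx : x ∈ B) : σ (σ x) = g (σ x) := (pairing_of_mem (by simp [hσ, hx])).symm
  have order_prod : ∏ v, orderSign e v (σ v) = ∏ x ∈ B, ∏ y ∈ B,
      if x = y then orderSign e x (σ x) * orderSign e (σ x) (σ (σ x)) else 1 := by
    rw [prod_eq_prod_mul_comp σ.injective hσ]
    exact prod_congr rfl fun x hx ↦ by rw [prod_ite_eq, if_pos hx]
  have crossing_prod_f : ∏ u, ∏ v, crossingSign e f u v =
      ∏ x ∈ B, ∏ y ∈ B, edgePairProd f (crossingSign e f) x y :=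
    prod_prod_eq_prod_prod_edgePairProd hff.injective (pairing_mem_iff hσ) _
  have crossing_prod_g : ∏ u, ∏ v, crossingSign e g u v =
      ∏ x ∈ B, ∏ y ∈ B, edgePairProd g (crossingSign e g) (σ x) (σ y) := by
    rw [prod_prod_eq_prod_prod_edgePairProd hgg.injective (pairing_mem_iff hσ'),
      prod_compl_eq_prod_comp σ.injective hσ]
    exact prod_congr rfl fun x _ ↦ prod_compl_eq_prod_comp σ.injective hσ _
  rw [sign_eq_prod_prod_inversionSign e, order_prod, crossing_prod_f, crossing_prod_g,
    prod_prod_eq_prod_prod_edgePairProd σ.injective hσ]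
  simp only [← prod_mul_distrib]
  refine prod_prod_congr_of_mul_swap B (fun x hx ↦ ?_) fun x hx y hy hxy ↦ ?_
  · have hxσ : x ≠ σ x := ne_of_mem_of_not_mem hx (by simp [hσ, hx])
    simp only [edgePairProd_crossingSign_self (hff x), edgePairProd_crossingSign_self (hgg (σ x)),
      edgePairProd_inversionSign_self σ hxσ, if_true, mul_one]
  · have hxσy : x ≠ σ y := ne_of_mem_of_not_mem hx (by simp [hσ, hy])
    have hσxy : σ x ≠ y := (ne_of_mem_of_not_mem hy (by simp [hσ, hx])).symm
    rw [edgePairProd_inversionSign_mul_swap σ hxy hxσy hσxy, edgePairProd_congr (hfσ hx) (hfσ hy),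
      edgePairProd_congr (hgσ hx) (hgσ hy),
      ← edgePairProd_crossingSign_mul_swap (hff x) (hff y) hxy (by rwa [← hfσ hy]),
      ← edgePairProd_crossingSign_mul_swap (hgg (σ x)) (hgg (σ y)) (σ.injective.ne hxy)
        (by rw [← hgσ hy]; exact σ.injective.ne hxσy), if_neg hxy, if_neg hxy.symm]
    simp only [one_mul]
    ac_rfl

end Pairing

section Crossing

variable {V : Type*} [Fintype V] {N n : ℕ} {e : V ≃ Fin N} {f : V → V}

lemma card_filter_lt (e : V ≃ Fin N) (v : V) : #{u | e u < e v} = (e v : ℕ) := by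
  rw [← Fin.card_Iio (e v), ← filter_gt_eq_Iio]
  exact card_equiv e (by simp)

/-- An arc starting before `v` either passes over `v` or has both ends before `v`. Up to pairs, the
arcs passing over `v` are thus counted by the vertices before `v`. -/
lemma prod_straddle_eq_neg_one_pow (hf : f.Involutive) (hne : ∀ v, f v ≠ v) {v : V}
    (hv : e v < e (f v)) :
    ∏ u, (if e u < e v ∧ e v < e (f u) then -1 else 1 : ℤˣ) = (-1) ^ (e v : ℕ) := by
  have cancel : ∏ u, (if e u < e v ∧ e (f u) < e v then -1 else 1 : ℤˣ) = 1 := by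
    refine prod_involution (fun u _ ↦ f u) (fun u _ ↦ ?_) (fun u _ _ ↦ hne u) (by simp)
      fun u _ ↦ hf u
    simp only [hf u, and_comm (a := e (f u) < e v)]
    split_ifs <;> rfl
  rw [← card_filter_lt, ← prod_const, prod_filter, ← mul_one (∏ u, _), ← cancel, ← prod_mul_distrib]
  refine prod_congr rfl fun u _ ↦ ?_
  by_cases hu : e u < e v
  · have hfu : e (f u) ≠ e v := fun h ↦ by
      obtain rfl := e.injective h
      exact hu.not_gt (by rwa [hf u] at hv)
    rcases hfu.lt_or_gt with h | h <;> simp [hu, h, h.not_gt]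
  · simp [hu]

/-- The two vertices are one apart or `n` apart in the enumeration `e`, like neighbours in a grid
enumerated along its columns of height `n`. -/
def IsStep (e : V ≃ Fin N) (n : ℕ) (u v : V) : Prop :=
  ((e u : ℕ) + 1 = e v ∨ (e v : ℕ) + 1 = e u) ∨ (e u : ℕ) + n = e v ∨ (e v : ℕ) + n = e u

/-- The sign `(-1) ^ e u` if `u` and `v` are `n` apart in the enumeration `e`, and `1` otherwise. -/
def jumpSign (e : V ≃ Fin N) (n : ℕ) (u v : V) : ℤˣ :=
  if (e u : ℕ) + n = e v ∨ (e v : ℕ) + n = e u then (-1) ^ (e u : ℕ) else 1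

lemma prod_crossingSign_eq_ite (hf : f.Involutive) (hstep : ∀ v, IsStep e n v (f v))
    (hne : ∀ v, f v ≠ v) (v : V) :
    ∏ u, crossingSign e f u v = if (e v : ℕ) + n = e (f v) then (-1) ^ (e v : ℕ) else 1 := by
  split_ifs with hjump
  · have hv : e v < e (f v) := by
      refine lt_of_le_of_ne ?_ (e.injective.ne (hne v).symm)
      rw [Fin.le_def]
      lia
    rw [← prod_straddle_eq_neg_one_pow hf hne hv]
    refine prod_congr rfl fun u _ ↦ if_congr ?_ rfl rfl
    have := hstep u
    simp only [IsStep, Fin.lt_def] at *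
    lia
  · refine prod_eq_one fun u _ ↦ if_neg ?_
    have := hstep v
    simp only [IsStep, Fin.lt_def] at *
    lia

lemma prod_prod_crossingSign_eq_prod_jumpSign (hf : f.Involutive)
    (hstep : ∀ v, IsStep e n v (f v)) (hn : Even n) {B : Finset V} (hfB : ∀ v, f v ∈ B ↔ v ∉ B) :
    ∏ u, ∏ v, crossingSign e f u v = ∏ v ∈ B, jumpSign e n v (f v) := by
  have hne (v : V) : f v ≠ v := fun h ↦ by have := hfB v; rw [h] at this; tauto
  rw [prod_comm]
  simp only [prod_crossingSign_eq_ite hf hstep hne]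
  rw [prod_eq_prod_mul_comp hf.injective hfB]
  refine prod_congr rfl fun v _ ↦ ?_
  have : (e v : ℕ) ≠ e (f v) := fun h ↦ hne v (e.injective (Fin.ext h.symm))
  rw [hf v, jumpSign]
  by_cases h₁ : (e v : ℕ) + n = e (f v)
  · rw [if_pos h₁, if_neg (by lia), if_pos (Or.inl h₁), mul_one]
  · by_cases h₂ : (e (f v) : ℕ) + n = e v
    · rw [if_neg h₁, if_pos h₂, if_pos (Or.inr h₂), ← h₂, pow_add, hn.neg_one_pow, one_mul, mul_one]
    · simp [h₁, h₂]

variable [DecidableEq V]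

theorem sign_eq_prod_orderSign_mul_jumpSign {σ : Perm V} {B : Finset V} (hn : Even n)
    (hstep : ∀ v, IsStep e n v (σ v)) (hσ : ∀ v, σ v ∈ B ↔ v ∉ B) :
    Perm.sign σ = ∏ v, orderSign e v (σ v) * jumpSign e n v (σ v) := by
  have hpair (C : Finset V) (v : V) : IsStep e n v (pairing σ C v) := by
    by_cases hv : v ∈ C
    · rw [pairing_of_mem hv]
      exact hstep v
    · have := hstep (σ.symm v)
      rw [σ.apply_symm_apply] at this
      rw [pairing_of_notMem hv]
      unfold IsStep at *
      tauto
  have hσ' (v : V) : σ v ∈ Bᶜ ↔ v ∉ Bᶜ := by simp [hσ]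
  have hcross {C : Finset V} (hC : ∀ v, σ v ∈ C ↔ v ∉ C) :
      ∏ u, ∏ v, crossingSign e (pairing σ C) u v = ∏ v ∈ C, jumpSign e n v (σ v) := by
    rw [prod_prod_crossingSign_eq_prod_jumpSign (involutive_pairing hC) (hpair C) hn
      (pairing_mem_iff hC)]
    exact prod_congr rfl fun v hv ↦ by rw [pairing_of_mem hv]
  rw [sign_eq_prod_orderSign_mul_prod_crossingSign e hσ, hcross hσ, hcross hσ',
    prod_mul_prod_compl, prod_mul_distrib]

end Crossing

section Determinant

variable {V : Type*} {G : SimpleGraph V} {f g : V → V}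

/-- The perfect matchings of `G`, encoded as the maps which send each vertex to its partner. -/
def IsPartnerMap (G : SimpleGraph V) (f : V → V) : Prop := f.Involutive ∧ ∀ v, G.Adj v (f v)

/-- The perfect matching, as a subgraph of `G`, which is encoded by a partner map. -/
def IsPartnerMap.toSubgraph (hf : IsPartnerMap G f) : G.Subgraph where
  verts := Set.univ
  Adj u v := f u = v
  adj_sub := by rintro u v rfl; exact hf.2 u
  edge_vert _ := Set.mem_univ _
  symm := ⟨by rintro u v rfl; exact hf.1 u⟩

lemma IsPartnerMap.isPerfectMatching_toSubgraph (hf : IsPartnerMap G f) :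
    hf.toSubgraph.IsPerfectMatching :=
  SimpleGraph.Subgraph.isPerfectMatching_iff.mpr fun v ↦ ⟨f v, rfl, fun _ h ↦ Eq.symm h⟩

lemma exists_toSubgraph_eq {M : G.Subgraph} (hM : M.IsPerfectMatching) :
    ∃ (f : V → V) (hf : IsPartnerMap G f), hf.toSubgraph = M := by
  choose f hf hf_unique using SimpleGraph.Subgraph.isPerfectMatching_iff.mp hM
  refine ⟨f, ⟨fun v ↦ (hf_unique _ v (hf v).symm).symm, fun v ↦ (hf v).adj_sub⟩,
    SimpleGraph.Subgraph.ext hM.2.verts_eq_univ.symm ?_⟩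
  ext u v
  exact ⟨by rintro rfl; exact hf u, fun h ↦ (hf_unique u v h).symm⟩

theorem card_isPartnerMap (G : SimpleGraph V) :
    Nat.card {f // IsPartnerMap G f} = numPerfectMatchings G := by
  rw [numPerfectMatchings, ← Nat.card_coe_set_eq]
  refine Nat.card_eq_of_bijective
    (fun f ↦ ⟨f.2.toSubgraph, f.2.isPerfectMatching_toSubgraph⟩) ⟨fun f g hfg ↦ ?_, fun M ↦ ?_⟩
  · ext v
    have subgraph_eq : f.2.toSubgraph = g.2.toSubgraph := congrArg Subtype.val hfg
    have adj : f.2.toSubgraph.Adj v (f.1 v) := rfl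
    rw [subgraph_eq] at adj
    exact Eq.symm adj
  · obtain ⟨f, hf, hM⟩ := exists_toSubgraph_eq M.2
    exact ⟨⟨f, hf⟩, Subtype.ext hM⟩

variable {B : Finset V}

lemma mem_iff_notMem_of_adj (hB : G.IsBipartiteWith (B : Set V) (B : Set V)ᶜ) {u v : V}
    (h : G.Adj u v) : v ∈ B ↔ u ∉ B := by
  rcases hB.mem_of_adj h with ⟨hu, hv⟩ | ⟨hu, hv⟩ <;> simp_all

lemma isPartnerMap_pairing [DecidableEq V] (hB : G.IsBipartiteWith (B : Set V) (B : Set V)ᶜ)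
    {σ : Perm V} (hσ : ∀ v, G.Adj v (σ v)) : IsPartnerMap G (pairing σ B) := by
  refine ⟨involutive_pairing fun v ↦ mem_iff_notMem_of_adj hB (hσ v), fun v ↦ ?_⟩
  by_cases hv : v ∈ B
  · rw [pairing_of_mem hv]
    exact hσ v
  · rw [pairing_of_notMem hv]
    simpa using (hσ (σ.symm v)).symm

lemma exists_pairing_eq [Fintype V] [DecidableEq V] (hf : f.Involutive) (hg : g.Involutive)
    (hfB : ∀ v, f v ∈ B ↔ v ∉ B) (hgB : ∀ v, g v ∈ B ↔ v ∉ B) :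
    ∃ σ : Perm V, pairing σ B = f ∧ pairing σ Bᶜ = g := by
  refine ⟨⟨fun v ↦ if v ∈ B then f v else g v, fun v ↦ if v ∈ B then g v else f v,
    fun v ↦ ?_, fun v ↦ ?_⟩, ?_, ?_⟩
  · by_cases hv : v ∈ B <;> simp [hv, hfB, hgB, hf v, hg v]
  · by_cases hv : v ∈ B <;> simp [hv, hfB, hgB, hf v, hg v]
  · ext v
    by_cases hv : v ∈ B <;> simp [pairing, hv]
  · ext v
    by_cases hv : v ∈ B <;> simp [pairing, hv]

theorem card_perm_forall_adj [Finite V] (hB : G.IsBipartiteWith (B : Set V) (B : Set V)ᶜ) :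
    Nat.card {σ : Perm V // ∀ v, G.Adj v (σ v)} = numPerfectMatchings G ^ 2 := by
  classical
  have := Fintype.ofFinite V
  have hB' : G.IsBipartiteWith ((Bᶜ : Finset V) : Set V) ((Bᶜ : Finset V) : Set V)ᶜ := by
    simpa using hB.symm
  rw [sq, ← card_isPartnerMap, ← Nat.card_prod]
  refine Nat.card_eq_of_bijective
    (fun σ ↦ (⟨_, isPartnerMap_pairing hB σ.2⟩, ⟨_, isPartnerMap_pairing hB' σ.2⟩))
    ⟨fun σ τ h ↦ ?_, fun ⟨⟨f, hf⟩, ⟨g, hg⟩⟩ ↦ ?_⟩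
  · simp only [Prod.mk.injEq, Subtype.mk.injEq] at h
    ext v
    by_cases hv : v ∈ B
    · rw [← pairing_of_mem hv, h.1, pairing_of_mem hv]
    · rw [← pairing_of_mem (mem_compl.mpr hv), h.2, pairing_of_mem (mem_compl.mpr hv)]
  · obtain ⟨σ, rfl, rfl⟩ := exists_pairing_eq hf.1 hg.1
      (fun v ↦ mem_iff_notMem_of_adj hB (hf.2 v)) fun v ↦ mem_iff_notMem_of_adj hB (hg.2 v)
    refine ⟨⟨σ, fun v ↦ ?_⟩, rfl⟩
    by_cases hv : v ∈ B
    · rw [← pairing_of_mem hv]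
      exact hf.2 v
    · rw [← pairing_of_mem (mem_compl.mpr hv)]
      exact hg.2 v

theorem det_eq_numPerfectMatchings_sq {R : Type*} [CommRing R] [Fintype V] [DecidableEq V]
    (hB : G.IsBipartiteWith (B : Set V) (B : Set V)ᶜ) {M : Matrix V V R}
    (hM : ∀ u v, ¬ G.Adj u v → M u v = 0)
    (hterm : ∀ σ : Perm V, (∀ v, G.Adj v (σ v)) → ((Perm.sign σ : ℤ) : R) * ∏ v, M v (σ v) = 1) :
    M.det = (numPerfectMatchings G : R) ^ 2 := by
  classical
  rw [← Matrix.det_transpose, Matrix.det_apply', ← Nat.cast_pow,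
    ← card_perm_forall_adj hB, Nat.card_eq_fintype_card, Fintype.card_subtype, ← sum_boole]
  refine sum_congr rfl fun σ _ ↦ ?_
  split_ifs with hσ
  · exact hterm σ hσ
  · obtain ⟨v, hv⟩ := not_forall.mp hσ
    exact mul_eq_zero_of_right _ (prod_eq_zero (mem_univ v) (hM _ _ hv))

end Determinant

section Grid

variable {m n : ℕ} {p q : Fin m × Fin n}

lemma gridGraph_adj : (gridGraph m n).Adj p q ↔
    (p.1 = q.1 ∧ ((p.2 : ℕ) + 1 = q.2 ∨ (q.2 : ℕ) + 1 = p.2)) ∨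
      (p.2 = q.2 ∧ ((p.1 : ℕ) + 1 = q.1 ∨ (q.1 : ℕ) + 1 = p.1)) := by
  simp only [gridGraph, SimpleGraph.fromRel_adj, ne_eq, Prod.ext_iff, Fin.ext_iff]
  lia

/-- One of the two colour classes of the chessboard colouring of the grid. -/
def evenVertices (m n : ℕ) : Finset (Fin m × Fin n) := {p | Even (p.1 + p.2 : ℕ)}

lemma isBipartiteWith_evenVertices (m n : ℕ) :
    (gridGraph m n).IsBipartiteWith (evenVertices m n : Set (Fin m × Fin n))
      (evenVertices m n : Set (Fin m × Fin n))ᶜ where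
  disjoint := disjoint_compl_right
  mem_of_adj p q h := by
    have parity : Even (q.1 + q.2 : ℕ) ↔ ¬ Even (p.1 + p.2 : ℕ) := by
      rw [gridGraph_adj] at h
      grind
    simp only [evenVertices, coe_filter, mem_univ, true_and, Set.mem_compl_iff, Set.mem_ofPred_eq]
    tauto

lemma isStep_finProdFinEquiv (h : (gridGraph m n).Adj p q) : IsStep finProdFinEquiv n p q := by
  rw [gridGraph_adj] at h
  simp only [IsStep, finProdFinEquiv_apply_val]
  rcases h with ⟨h₁, h₂ | h₂⟩ | ⟨h₁, h₂ | h₂⟩ <;> simp only [← h₂, h₁, mul_add] <;> lia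

lemma kasteleynMatrix_of_fst_eq (h₁ : p.1 = q.1) (h₂ : (p.2 : ℕ) + 1 = q.2 ∨ (q.2 : ℕ) + 1 = p.2) :
    kasteleynMatrix m n p q = I := by
  rw [kasteleynMatrix, if_neg (by rw [h₁]; lia), if_pos ⟨h₁, h₂⟩]

lemma kasteleynMatrix_of_snd_eq (h₁ : p.2 = q.2) (h₂ : (p.1 : ℕ) + 1 = q.1 ∨ (q.1 : ℕ) + 1 = p.1) :
    kasteleynMatrix m n p q = 1 :=
  if_pos ⟨h₁, h₂⟩

lemma kasteleynMatrix_eq_zero (h : ¬ (gridGraph m n).Adj p q) : kasteleynMatrix m n p q = 0 := by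
  rw [gridGraph_adj] at h
  rw [kasteleynMatrix, if_neg (by tauto), if_neg (by tauto)]

lemma orderSign_mul_jumpSign_of_fst_eq (hn : Even n) (h₁ : p.1 = q.1)
    (h₂ : (p.2 : ℕ) + 1 = q.2 ∨ (q.2 : ℕ) + 1 = p.2) :
    orderSign finProdFinEquiv p q * jumpSign finProdFinEquiv n p q =
      if (p.2 : ℕ) < q.2 then 1 else -1 := by
  have lt_iff : finProdFinEquiv p < finProdFinEquiv q ↔ (p.2 : ℕ) < q.2 := by
    rw [Fin.lt_def, finProdFinEquiv_apply_val, finProdFinEquiv_apply_val, h₁, add_lt_add_iff_right]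
  have not_jump : jumpSign finProdFinEquiv n p q = 1 := by
    refine if_neg ?_
    simp only [finProdFinEquiv_apply_val, h₁]
    grind
  simp only [orderSign, lt_iff, not_jump, mul_one]

lemma orderSign_mul_jumpSign_of_snd_eq (hn : Even n) (h₁ : p.2 = q.2)
    (h₂ : (p.1 : ℕ) + 1 = q.1 ∨ (q.1 : ℕ) + 1 = p.1) :
    orderSign finProdFinEquiv p q * jumpSign finProdFinEquiv n p q =
      (if (p.1 : ℕ) < q.1 then 1 else -1) * (-1) ^ (p.2 : ℕ) := by
  have lt_iff : finProdFinEquiv p < finProdFinEquiv q ↔ (p.1 : ℕ) < q.1 := by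
    rw [Fin.lt_def, finProdFinEquiv_apply_val, finProdFinEquiv_apply_val, h₁, add_lt_add_iff_left,
      Nat.mul_lt_mul_left q.2.pos]
  have jump : jumpSign finProdFinEquiv n p q = (-1) ^ (p.2 : ℕ) := by
    rw [jumpSign, if_pos, finProdFinEquiv_apply_val, pow_add, pow_mul, hn.neg_one_pow, one_pow,
      mul_one]
    simp only [finProdFinEquiv_apply_val, h₁]
    rcases h₂ with h₂ | h₂ <;> simp only [← h₂, mul_add] <;> lia
  simp only [orderSign, lt_iff, jump]

/-- The factor of row `p` in a rescaling of the rows and columns of the Kasteleyn matrix which turns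
the entry of each edge into the sign that this edge contributes to the sign of a permutation. -/
noncomputable def rowGauge (p : Fin m × Fin n) : ℂ := I ^ (p.1 : ℕ) * (-1) ^ (p.2 : ℕ).choose 2

/-- The factor of column `p` in the rescaling whose row factors are given by `rowGauge`. -/
noncomputable def colGauge (p : Fin m × Fin n) : ℂ :=
  I * (-I) ^ (p.1 : ℕ) * (-1) ^ ((p.2 : ℕ) + 1).choose 2

lemma choose_two_succ (k : ℕ) : (k + 1).choose 2 = k + k.choose 2 := by
  rw [Nat.choose_succ_succ' k 1, Nat.choose_one_right]

lemma rowGauge_mul_colGauge (p : Fin m × Fin n) :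
    rowGauge p * colGauge p = I * (-1) ^ (p.2 : ℕ) := by
  simp only [rowGauge, colGauge, choose_two_succ, pow_add]
  have hI : I ^ (p.1 : ℕ) * (-I) ^ (p.1 : ℕ) = 1 := by simp [← mul_pow]
  have hchoose : ((-1 : ℂ) ^ (p.2 : ℕ).choose 2) ^ 2 = 1 := by simp [← pow_mul']
  grind

lemma prod_rowGauge_mul_colGauge (hn : Even n) :
    ∏ p : Fin m × Fin n, rowGauge p * colGauge p = 1 := by
  have prod_range_even (k : ℕ) : ∏ b ∈ range (k + k), I * (-1) ^ b = 1 := by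
    induction k with
    | zero => rfl
    | succ k ih =>
      rw [show k + 1 + (k + 1) = k + k + 1 + 1 by ring, prod_range_succ, prod_range_succ, ih,
        pow_succ, Even.neg_one_pow ⟨k, rfl⟩]
      simp
  obtain ⟨k, rfl⟩ := hn
  simp only [rowGauge_mul_colGauge, Fintype.prod_prod_type]
  refine prod_eq_one fun a _ ↦ ?_
  rw [Fin.prod_univ_eq_prod_range (fun b ↦ I * (-1) ^ b), prod_range_even]

lemma rowGauge_mul_kasteleynMatrix_mul_colGauge (hn : Even n) (h : (gridGraph m n).Adj p q) :
    rowGauge p * kasteleynMatrix m n p q * colGauge q =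
      ((orderSign finProdFinEquiv p q * jumpSign finProdFinEquiv n p q : ℤˣ) : ℤ) := by
  have hI (k : ℕ) : I ^ k * (-I) ^ k = 1 := by simp [← mul_pow]
  have hneg (k : ℕ) : ((-1 : ℂ) ^ k) ^ 2 = 1 := by simp [← pow_mul']
  rcases gridGraph_adj.mp h with ⟨h₁, h₂⟩ | ⟨h₁, h₂⟩
  · rw [orderSign_mul_jumpSign_of_fst_eq hn h₁ h₂, kasteleynMatrix_of_fst_eq h₁ h₂]
    simp only [rowGauge, colGauge, h₁]
    rcases h₂ with h₂ | h₂
    · rw [if_pos (by lia), ← h₂]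
      push_cast [choose_two_succ, pow_add]
      grind [I_sq]
    · rw [if_neg (by lia), ← h₂]
      push_cast [choose_two_succ, pow_add]
      grind [I_sq]
  · rw [orderSign_mul_jumpSign_of_snd_eq hn h₁ h₂, kasteleynMatrix_of_snd_eq h₁ h₂]
    simp only [rowGauge, colGauge, h₁]
    rcases h₂ with h₂ | h₂
    · rw [if_pos (by lia), ← h₂]
      push_cast [choose_two_succ, pow_add]
      grind [I_sq]
    · rw [if_neg (by lia), ← h₂]
      push_cast [choose_two_succ, pow_add]
      grind [I_sq]

lemma sign_mul_prod_kasteleynMatrix (hn : Even n) {σ : Perm (Fin m × Fin n)}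
    (hσ : ∀ p, (gridGraph m n).Adj p (σ p)) :
    ((Perm.sign σ : ℤ) : ℂ) * ∏ p, kasteleynMatrix m n p (σ p) = 1 := by
  have gauge_prod : ∏ p, kasteleynMatrix m n p (σ p) =
      ∏ p, rowGauge p * kasteleynMatrix m n p (σ p) * colGauge (σ p) := by
    simp only [prod_mul_distrib]
    rw [Equiv.prod_comp σ, mul_right_comm, ← prod_mul_distrib, prod_rowGauge_mul_colGauge hn,
      one_mul]
  have sign_eq := sign_eq_prod_orderSign_mul_jumpSign hn (fun p ↦ isStep_finProdFinEquiv (hσ p))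
    fun p ↦ mem_iff_notMem_of_adj (isBipartiteWith_evenVertices m n) (hσ p)
  rw [gauge_prod, sign_eq]
  simp only [rowGauge_mul_kasteleynMatrix_mul_colGauge hn (hσ _)]
  rw [← Int.cast_prod, ← Units.coe_prod, ← Int.cast_mul, ← Units.val_mul, Int.units_mul_self]
  simp

end Grid

end Kasteleyn

/-- For m positive and n positive even, the determinant of the Kasteleyn
matrix equals the square of the number of perfect matchings of the m-by-n
grid graph. -/
theorem det_kasteleynMatrix (m n : ℕ) (hm : 0 < m) (hn : 0 < n) (hne : Even n) :
    (kasteleynMatrix m n).det = ((numPerfectMatchings (gridGraph m n) : ℂ)) ^ 2 := by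
  refine Kasteleyn.det_eq_numPerfectMatchings_sq (Kasteleyn.isBipartiteWith_evenVertices m n)
    (fun p q h ↦ ?_) fun σ hσ ↦ ?_
  · exact Kasteleyn.kasteleynMatrix_eq_zero h
  · exact Kasteleyn.sign_mul_prod_kasteleynMatrix hne hσ
end

section
/- Let m, n be positive integers, let C_m and C_n be the m-by-m and n-by-n tridiagonal matrices with (x,y)-entry 1 if |x − y| = 1 and 0 otherwise, and let I_m, I_n denote identity matrices. Then det(C_m ⊗ I_n + i·(I_m ⊗ C_n)) = ∏_{j=1}^{m} ∏_{k=1}^{n} (2 cos(πj/(m+1)) + 2i cos(πk/(n+1))), where ⊗ denotes the Kronecker product of complex matrices and i is the imaginary unit. -/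
open Real Matrix Kronecker

/-- The m-by-m tridiagonal 0-1 complex matrix with ones exactly on the first
super- and sub-diagonals (adjacency matrix of the path graph on m vertices). -/
def pathMatrixC (m : ℕ) : Matrix (Fin m) (Fin m) ℂ :=
  fun x y => if x.val + 1 = y.val ∨ y.val + 1 = x.val then 1 else 0

/-!
By `sin (t θ) + sin ((t + 2) θ) = 2 cos θ · sin ((t + 1) θ)`, the vector `x ↦ sin ((x + 1) θ)` is
an eigenvector of the `m × m` path matrix when `sin ((m + 1) θ) = 0`, the condition that makes the
missing neighbour of the last vertex contribute nothing. The `m` angles `π j / (m + 1)` give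
distinct eigenvalues `2 cos θ`, so the path matrix is diagonalizable. If `P` diagonalizes `A` and
`Q` diagonalizes `B`, then `P ⊗ Q` diagonalizes `A ⊗ 1 + 1 ⊗ B`, whose eigenvalues are therefore
the pairwise sums.
-/

section Diagonalization

variable {ι κ S R K : Type*} [Fintype ι] [DecidableEq ι] [Fintype κ] [DecidableEq κ]
  [CommSemiring S] [CommRing R] [Field K]

lemma det_eq_prod_of_mul_eq_mul_diagonal {A P : Matrix ι ι R} {d : ι → R} (hP : IsUnit P)
    (hAP : A * P = P * diagonal d) : A.det = ∏ i, d i := by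
  have hdet : A.det * P.det = (∏ i, d i) * P.det := by
    rw [← det_mul, hAP, det_mul, det_diagonal, mul_comm]
  exact ((isUnit_iff_isUnit_det P).mp hP).mul_right_cancel hdet

lemma kroneckerSum_mul_kronecker_eq_mul_diagonal {A P : Matrix ι ι S} {B Q : Matrix κ κ S}
    {a : ι → S} {b : κ → S} (hAP : A * P = P * diagonal a) (hBQ : B * Q = Q * diagonal b) :
    (A ⊗ₖ (1 : Matrix κ κ S) + (1 : Matrix ι ι S) ⊗ₖ B) * (P ⊗ₖ Q) =
      (P ⊗ₖ Q) * diagonal fun p => a p.1 + b p.2 := by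
  rw [Matrix.add_mul, ← mul_kronecker_mul, ← mul_kronecker_mul, Matrix.one_mul, Matrix.one_mul,
    hAP, hBQ]
  ext ⟨i, k⟩ ⟨j, l⟩
  simp only [Matrix.add_apply, kronecker_apply, mul_diagonal]
  ring

lemma det_kroneckerSum_eq_prod {A P : Matrix ι ι R} {B Q : Matrix κ κ R} {a : ι → R} {b : κ → R}
    (hP : IsUnit P) (hQ : IsUnit Q) (hAP : A * P = P * diagonal a)
    (hBQ : B * Q = Q * diagonal b) :
    (A ⊗ₖ (1 : Matrix κ κ R) + (1 : Matrix ι ι R) ⊗ₖ B).det = ∏ i, ∏ k, (a i + b k) := by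
  rw [det_eq_prod_of_mul_eq_mul_diagonal (hP.kronecker hQ)
    (kroneckerSum_mul_kronecker_eq_mul_diagonal hAP hBQ), Fintype.prod_prod_type]

lemma exists_isUnit_mul_eq_mul_diagonal {A : Matrix ι ι K} {μ : ι → K}
    (hμ : Function.Injective μ) (hA : ∀ i, Module.End.HasEigenvalue (toLin' A) (μ i)) :
    ∃ P : Matrix ι ι K, IsUnit P ∧ A * P = P * diagonal μ := by
  choose v hv using fun i => (hA i).exists_hasEigenvector
  refine ⟨(of v)ᵀ, ?_, ?_⟩
  · rw [← linearIndependent_cols_iff_isUnit]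
    exact Module.End.eigenvectors_linearIndependent' (toLin' A) μ hμ v hv
  · ext x j
    have hAv : (A *ᵥ v j) x = μ j * v j x := congrFun (hv j).apply_eq_smul x
    rw [mul_diagonal, mul_comm]
    exact hAv

end Diagonalization

lemma pathMatrixC_mulVec_apply {m : ℕ} {g : ℕ → ℂ} (hg_zero : g 0 = 0) (hg_last : g (m + 1) = 0)
    (x : Fin m) : (pathMatrixC m *ᵥ fun y => g (y + 1)) x = g x + g (x + 2) := by
  let F (t : ℕ) : ℂ := (if t = x then g t else 0) + if t = x + 2 then g t else 0
  have entry_mul (y : Fin m) : pathMatrixC m x y * g (y + 1) = F (y + 1) := by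
    simp only [pathMatrixC, F]
    split_ifs <;> first | omega | simp
  calc ∑ y : Fin m, pathMatrixC m x y * g (y + 1)
      = ∑ y ∈ Finset.range m, F (y + 1) := by
        rw [← Fin.sum_univ_eq_sum_range fun y => F (y + 1)]
        exact Finset.sum_congr rfl fun y _ => entry_mul y
    _ = ∑ t ∈ Finset.range (m + 2), F t := by
        rw [Finset.sum_range_succ, Finset.sum_range_succ']
        simp [F, hg_zero, hg_last]
    _ = g x + g (x + 2) := by
        simp [F, Finset.sum_add_distrib, x.isLt.trans (Nat.lt_add_of_pos_right two_pos)]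

lemma hasEigenvalue_pathMatrixC_two_mul_cos {m : ℕ} {θ : ℂ} (hm : 0 < m)
    (hθ : Complex.sin ((m + 1) * θ) = 0) (hsin : Complex.sin θ ≠ 0) :
    Module.End.HasEigenvalue (toLin' (pathMatrixC m)) (2 * Complex.cos θ) := by
  let g (t : ℕ) : ℂ := Complex.sin (t * θ)
  have recurrence (t : ℕ) : g t + g (t + 2) = 2 * Complex.cos θ * g (t + 1) := by
    have h_prev : (t : ℂ) * θ = (t + 1) * θ - θ := by ring
    have h_next : ((t : ℂ) + 2) * θ = (t + 1) * θ + θ := by ring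
    simp only [g, Nat.cast_add, Nat.cast_one, Nat.cast_ofNat]
    rw [h_prev, h_next, Complex.sin_sub, Complex.sin_add]
    ring
  refine Module.End.hasEigenvalue_of_hasEigenvector (x := fun x : Fin m => g (x + 1)) ⟨?_, ?_⟩
  · rw [Module.End.mem_eigenspace_iff, toLin'_apply]
    ext x
    rw [pathMatrixC_mulVec_apply (by simp [g]) (by simpa [g] using hθ), recurrence]
    rfl
  · intro h
    exact hsin (by simpa [g] using congrFun h ⟨0, hm⟩)

/-- The angle `π j / (m + 1)` whose double cosine is the `j`-th eigenvalue of `pathMatrixC m`;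
the index `j ∈ {1, …, m}` is encoded as `j + 1` with `j : Fin m`. -/
noncomputable def pathAngle {m : ℕ} (j : Fin m) : ℝ := π * (j + 1 : ℕ) / (m + 1)

lemma pathAngle_mem_Ioo {m : ℕ} (j : Fin m) : pathAngle j ∈ Set.Ioo 0 π := by
  have hj : ((j + 1 : ℕ) : ℝ) < m + 1 := by exact_mod_cast Nat.succ_lt_succ j.isLt
  refine ⟨by unfold pathAngle; positivity, ?_⟩
  rw [pathAngle, div_lt_iff₀ (by positivity)]
  exact mul_lt_mul_of_pos_left hj pi_pos

lemma pathAngle_injective (m : ℕ) : Function.Injective (pathAngle (m := m)) := by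
  intro j k h
  have hm : (m : ℝ) + 1 ≠ 0 := by positivity
  have hjk : ((j + 1 : ℕ) : ℝ) = (k + 1 : ℕ) :=
    mul_left_cancel₀ pi_ne_zero ((div_left_inj' hm).mp h)
  exact Fin.ext (Nat.succ_injective (Nat.cast_injective hjk))

lemma sin_succ_mul_pathAngle {m : ℕ} (j : Fin m) : Real.sin ((m + 1) * pathAngle j) = 0 := by
  have hm : (m : ℝ) + 1 ≠ 0 := by positivity
  rw [pathAngle, mul_div_cancel₀ _ hm, mul_comm, Real.sin_nat_mul_pi]

/-- The `j`-th eigenvalue `2 cos (π j / (m + 1))` of `pathMatrixC m`, indexed like `pathAngle`. -/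
noncomputable def pathEigenvalue {m : ℕ} (j : Fin m) : ℂ := (2 * Real.cos (pathAngle j) : ℝ)

lemma pathEigenvalue_injective (m : ℕ) : Function.Injective (pathEigenvalue (m := m)) := by
  intro j k h
  have hcos : Real.cos (pathAngle j) = Real.cos (pathAngle k) :=
    mul_left_cancel₀ two_ne_zero (Complex.ofReal_injective h)
  exact pathAngle_injective m <| injOn_cos (Set.Ioo_subset_Icc_self (pathAngle_mem_Ioo j))
    (Set.Ioo_subset_Icc_self (pathAngle_mem_Ioo k)) hcos

lemma hasEigenvalue_pathEigenvalue {m : ℕ} (j : Fin m) :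
    Module.End.HasEigenvalue (toLin' (pathMatrixC m)) (pathEigenvalue j) := by
  have hsin : Real.sin (pathAngle j) ≠ 0 := (sin_pos_of_mem_Ioo (pathAngle_mem_Ioo j)).ne'
  have h := hasEigenvalue_pathMatrixC_two_mul_cos (θ := pathAngle j) j.pos
    (by exact_mod_cast sin_succ_mul_pathAngle j) (by exact_mod_cast hsin)
  simpa [pathEigenvalue] using h

lemma exists_isUnit_pathMatrixC_mul_eq (m : ℕ) :
    ∃ P : Matrix (Fin m) (Fin m) ℂ,
      IsUnit P ∧ pathMatrixC m * P = P * diagonal pathEigenvalue :=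
  exists_isUnit_mul_eq_mul_diagonal (pathEigenvalue_injective m) hasEigenvalue_pathEigenvalue

lemma prod_Icc_one_eq_prod_fin {M : Type*} [CommMonoid M] (n : ℕ) (f : ℕ → M) :
    ∏ j ∈ Finset.Icc 1 n, f j = ∏ j : Fin n, f (j + 1) := by
  rw [Fin.prod_univ_eq_prod_range (fun j => f (j + 1)) n, Finset.range_eq_Ico,
    Finset.prod_Ico_add' f 0 n 1, zero_add, Finset.Ico_add_one_right_eq_Icc]

theorem det_kronecker_path_general (m n : ℕ) (c : ℂ) :
    (pathMatrixC m ⊗ₖ (1 : Matrix (Fin n) (Fin n) ℂ) +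
        c • ((1 : Matrix (Fin m) (Fin m) ℂ) ⊗ₖ pathMatrixC n)).det =
      ∏ j ∈ Finset.Icc 1 m, ∏ k ∈ Finset.Icc 1 n,
        (((2 * Real.cos (π * j / (m + 1)) : ℝ) : ℂ) +
          c * ((2 * Real.cos (π * k / (n + 1)) : ℝ) : ℂ)) := by
  obtain ⟨P, hP, hCP⟩ := exists_isUnit_pathMatrixC_mul_eq m
  obtain ⟨Q, hQ, hCQ⟩ := exists_isUnit_pathMatrixC_mul_eq n
  have hcCQ : (c • pathMatrixC n) * Q = Q * diagonal (c • pathEigenvalue) := by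
    rw [Matrix.smul_mul, hCQ, diagonal_smul, Matrix.mul_smul]
  rw [← kronecker_smul, det_kroneckerSum_eq_prod hP hQ hCP hcCQ]
  simp only [prod_Icc_one_eq_prod_fin]
  rfl

/-- det(C_m ⊗ I_n + i (I_m ⊗ C_n)) =
∏_{j=1}^m ∏_{k=1}^n (2cos(πj/(m+1)) + 2i cos(πk/(n+1))). -/
theorem det_kronecker_path (m n : ℕ) (hm : 0 < m) (hn : 0 < n) :
    (pathMatrixC m ⊗ₖ (1 : Matrix (Fin n) (Fin n) ℂ) +
        Complex.I • ((1 : Matrix (Fin m) (Fin m) ℂ) ⊗ₖ pathMatrixC n)).det =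
      ∏ j ∈ Finset.Icc 1 m, ∏ k ∈ Finset.Icc 1 n,
        (((2 * Real.cos (π * j / (m + 1)) : ℝ) : ℂ) +
          Complex.I * ((2 * Real.cos (π * k / (n + 1)) : ℝ) : ℂ)) :=
  det_kronecker_path_general m n Complex.I
end

section
/- The number of perfect matchings of the 8-by-8 grid graph (equivalently, the number of domino tilings of an ordinary 8-by-8 checkerboard) is 12988816 = 3604². -/
/-!
Fill the board cell by cell, row by row. The first uncovered cell must be paired with one of its
uncovered neighbours, that is with the cell below it or with the cell to its right, so the covered
cells in and below the current row always form a profile: one bit per column. The number of ways to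
finish a tiling depends only on this profile, and the counts for two consecutive rows are related by
a transfer operator. Iterating the operator over all the rows counts the perfect matchings of an
arbitrary grid graph, which for the 8-by-8 board is a short computation.
-/

open SimpleGraph

section Embedding

variable {V W : Type*} {G : SimpleGraph V} {G' : SimpleGraph W}

theorem comap_map_subgraph {f : G →g G'} (hf : Function.Injective f) (M : G.Subgraph) :
    (M.map f).comap f = M := by
  ext u v
  · simp [hf.mem_set_image]
  · simpa [Relation.map_apply, hf.eq_iff] using M.adj_sub

theorem map_comap_subgraph (f : G ↪g G') {M : G'.Subgraph} (hM : M.verts ⊆ Set.range f) :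
    (M.comap f.toHom).map f.toHom = M := by
  ext u v
  · exact Set.ext_iff.mp (Set.image_preimage_eq_of_subset hM) u
  · constructor
    · rintro ⟨a, b, ⟨-, hab⟩, rfl, rfl⟩
      exact hab
    · intro huv
      obtain ⟨a, rfl⟩ := hM huv.fst_mem
      obtain ⟨b, rfl⟩ := hM huv.snd_mem
      exact ⟨a, b, ⟨f.map_adj_iff.mp (M.adj_sub huv), huv⟩, rfl, rfl⟩

theorem isMatching_map_iff {f : G →g G'} (hf : Function.Injective f) {M : G.Subgraph} :
    (M.map f).IsMatching ↔ M.IsMatching := by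
  refine ⟨fun h v hv => ?_, fun h => h.map f hf⟩
  obtain ⟨_, ⟨a, b, hab, ha, rfl⟩, hb⟩ := h (Set.mem_image_of_mem f hv)
  obtain rfl : a = v := hf ha
  exact ⟨b, hab, fun w hw => hf (hb (f w) ⟨a, w, hw, rfl, rfl⟩)⟩

theorem finite_setOf_verts_subset (G : SimpleGraph V) {R : Set V} (hR : R.Finite) :
    {M : G.Subgraph | M.verts ⊆ R}.Finite := by
  have : Finite R := hR
  refine (Set.finite_range (Subgraph.map (Embedding.induce (G := G) R).toHom)).subset ?_
  intro M hM
  exact ⟨_, map_comap_subgraph (Embedding.induce R) (hM.trans Subtype.range_val.superset)⟩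

end Embedding

section Completions

variable {V W : Type*} {G : SimpleGraph V} {R C : Set V} {u v : V}

/-- The matchings of `G` that cover exactly the vertices of `R` that are not yet in `C`. When `C` is
not contained in `R` there are none. -/
def completions (G : SimpleGraph V) (R C : Set V) : Set G.Subgraph :=
  {M | M.IsMatching ∧ Disjoint C M.verts ∧ C ∪ M.verts = R}

/-- The number of ways to complete a partial matching covering `C` to one covering `R`. -/
noncomputable def numCompletions (G : SimpleGraph V) (R C : Set V) : ℕ :=
  (completions G R C).ncard

theorem finite_completions (hR : R.Finite) : (completions G R C).Finite :=
  (finite_setOf_verts_subset G hR).subset fun _ hM => hM.2.2 ▸ Set.subset_union_right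

theorem numPerfectMatchings_eq_numCompletions_range {G' : SimpleGraph W} (f : G ↪g G') :
    numPerfectMatchings G = numCompletions G' (Set.range f) ∅ := by
  have hinj : Function.Injective (Subgraph.map f.toHom) :=
    Function.LeftInverse.injective (comap_map_subgraph f.injective)
  rw [numPerfectMatchings, numCompletions, ← Set.ncard_image_of_injective _ hinj]
  congr 1
  ext M
  constructor
  · rintro ⟨M, ⟨hM, hspan⟩, rfl⟩
    exact ⟨(isMatching_map_iff f.injective).mpr hM, by simp, by simp [hspan.verts_eq_univ]⟩
  · rintro ⟨hM, -, hverts⟩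
    rw [Set.empty_union] at hverts
    have hmap := map_comap_subgraph f hverts.subset
    have hspan (v : V) : f v ∈ M.verts := hverts.superset (Set.mem_range_self v)
    exact ⟨M.comap f.toHom, ⟨(isMatching_map_iff f.injective).mp (hmap.symm ▸ hM), hspan⟩, hmap⟩

theorem numCompletions_self : numCompletions G R R = 1 := by
  rw [numCompletions, Set.ncard_eq_one]
  refine ⟨⊥, Set.eq_singleton_iff_unique_mem.mpr ⟨⟨?_, ?_, ?_⟩, ?_⟩⟩
  · simp [Subgraph.IsMatching]
  · simp
  · simp
  · rintro M ⟨-, hdisj, hunion⟩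
    have hsub : M.verts ⊆ R := Set.union_eq_left.mp hunion
    exact M.eq_bot_iff_verts_eq_empty.mpr (hdisj.symm.eq_bot_of_le hsub)

theorem numCompletions_eq_zero_of_not_subset (h : ¬C ⊆ R) : numCompletions G R C = 0 := by
  have : completions G R C = ∅ :=
    Set.eq_empty_of_forall_notMem fun M hM => h (hM.2.2 ▸ Set.subset_union_left)
  rw [numCompletions, this, Set.ncard_empty]

theorem deleteVerts_sup_subgraphOfAdj {M : G.Subgraph} (hM : M.IsMatching) (hvu : M.Adj v u) :
    M.deleteVerts {v, u} ⊔ G.subgraphOfAdj (M.adj_sub hvu) = M := by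
  ext a b
  · grind [hvu.fst_mem, hvu.snd_mem, Subgraph.verts_sup, Subgraph.deleteVerts_verts,
      subgraphOfAdj_verts]
  · have hv (w) (h : M.Adj v w) : w = u := hM.eq_of_adj_left h hvu
    have hu (w) (h : M.Adj u w) : w = v := hM.eq_of_adj_left h hvu.symm
    simp only [Subgraph.sup_adj, Subgraph.deleteVerts_adj, subgraphOfAdj_adj, Sym2.eq_iff]
    grind [Subgraph.Adj.fst_mem, Subgraph.Adj.snd_mem, Subgraph.Adj.symm]

theorem sup_subgraphOfAdj_deleteVerts {M : G.Subgraph} (hM : Disjoint {v, u} M.verts)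
    (hvu : G.Adj v u) : (M ⊔ G.subgraphOfAdj hvu).deleteVerts {v, u} = M := by
  rw [Set.disjoint_insert_left, Set.disjoint_singleton_left] at hM
  ext a b
  · simp only [Subgraph.deleteVerts_verts, Subgraph.verts_sup, subgraphOfAdj_verts]
    grind
  · simp only [Subgraph.deleteVerts_adj, Subgraph.verts_sup, subgraphOfAdj_verts, Subgraph.sup_adj,
      subgraphOfAdj_adj, Sym2.eq_iff]
    grind [Subgraph.Adj.fst_mem, Subgraph.Adj.snd_mem]

theorem isMatching_deleteVerts {M : G.Subgraph} (hM : M.IsMatching) (hvu : M.Adj v u) :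
    (M.deleteVerts {v, u}).IsMatching := by
  rintro a ⟨ha, hav⟩
  obtain ⟨b, hab, hb⟩ := hM ha
  have hv (h : b = v) : a = u := hM.eq_of_adj_left (h ▸ hab.symm) hvu
  have hu (h : b = u) : a = v := hM.eq_of_adj_left (h ▸ hab.symm) hvu.symm
  refine ⟨b, ?_, fun c hc => hb c (Subgraph.deleteVerts_le.2 hc)⟩
  simp only [Subgraph.deleteVerts_adj]
  grind [hab.snd_mem]

theorem ncard_completions_adj (hvu : G.Adj v u) (hv : v ∉ C) (hu : u ∉ C) :
    {M ∈ completions G R C | M.Adj v u}.ncard = numCompletions G R (insert v (insert u C)) := by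
  have hinv : Set.InvOn (fun M : G.Subgraph => M ⊔ G.subgraphOfAdj hvu)
      (fun M => M.deleteVerts {v, u}) {M ∈ completions G R C | M.Adj v u}
      (completions G R (insert v (insert u C))) := by
    refine ⟨fun M hM => deleteVerts_sup_subgraphOfAdj hM.1.1 hM.2, fun M hM => ?_⟩
    exact sup_subgraphOfAdj_deleteVerts (hM.2.1.mono_left (by grind)) hvu
  refine (hinv.bijOn ?_ ?_).ncard_eq
  · rintro M ⟨⟨hM, hdisj, hunion⟩, hadj⟩
    refine ⟨isMatching_deleteVerts hM hadj, ?_, ?_⟩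
    · simp only [Set.disjoint_left, Subgraph.deleteVerts_verts] at hdisj ⊢
      grind
    · rw [← hunion, Subgraph.deleteVerts_verts]
      grind [hadj.fst_mem, hadj.snd_mem]
  · rintro M ⟨hM, hdisj, hunion⟩
    have hvuM : Disjoint M.verts {v, u} := (hdisj.mono_left (by grind)).symm
    refine ⟨⟨hM.sup (.subgraphOfAdj hvu) ?_, ?_, ?_⟩, by simp⟩
    · rwa [hM.support_eq_verts, support_subgraphOfAdj]
    · simp only [Set.disjoint_left, Subgraph.verts_sup, subgraphOfAdj_verts] at hdisj ⊢
      grind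
    · rw [← hunion, Subgraph.verts_sup, subgraphOfAdj_verts]
      grind

theorem numCompletions_eq_sum (hR : R.Finite) (hvR : v ∈ R) (hvC : v ∉ C) {N : Finset V}
    (hN : ∀ u, u ∈ N ↔ G.Adj v u ∧ u ∉ C) :
    numCompletions G R C = ∑ u ∈ N, numCompletions G R (insert v (insert u C)) := by
  have hcover : completions G R C = ⋃ u ∈ N, {M ∈ completions G R C | M.Adj v u} := by
    ext M
    simp only [Set.mem_iUnion, Set.mem_sep_iff, exists_prop]
    refine ⟨fun hM => ?_, fun ⟨_, _, hM, _⟩ => hM⟩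
    have ⟨hmatch, hdisj, hunion⟩ := hM
    have hvM : v ∈ M.verts := (hunion.superset hvR).resolve_left hvC
    obtain ⟨u, hvu, -⟩ := hmatch hvM
    have huC : u ∉ C := Set.disjoint_right.mp hdisj hvu.snd_mem
    exact ⟨u, (hN u).mpr ⟨M.adj_sub hvu, huC⟩, hM, hvu⟩
  have hpartners : (N : Set V).PairwiseDisjoint fun u => {M ∈ completions G R C | M.Adj v u} :=
    fun u _ w _ huw => Set.disjoint_left.mpr fun M hMu hMw =>
      huw (hMu.1.1.eq_of_adj_left hMu.2 hMw.2)
  have hfinite (u) : {M ∈ completions G R C | M.Adj v u}.Finite :=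
    (finite_completions hR).subset (Set.sep_subset _ _)
  calc numCompletions G R C
      = ∑ u ∈ N, {M ∈ completions G R C | M.Adj v u}.ncard := by
        rw [numCompletions, ← finsum_mem_coe_finset,
          ← N.finite_toSet.ncard_biUnion (fun u _ => hfinite u) hpartners]
        exact congrArg Set.ncard hcover
    _ = ∑ u ∈ N, numCompletions G R (insert v (insert u C)) :=
        Finset.sum_congr rfl fun u hu =>
          ncard_completions_adj ((hN u).mp hu).1 hvC ((hN u).mp hu).2

end Completions

section Grid

theorem hasse_nat_prod_adj {c d : ℕ × ℕ} : (hasse (ℕ × ℕ)).Adj c d ↔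
    c.1 = d.1 ∧ (c.2 + 1 = d.2 ∨ d.2 + 1 = c.2) ∨ c.2 = d.2 ∧ (c.1 + 1 = d.1 ∨ d.1 + 1 = c.1) := by
  simp only [hasse_adj, Prod.covBy_iff, Nat.covBy_iff_add_one_eq]
  omega

/-- An embedding of the `m × n` grid graph as the corner of the infinite quarter-plane grid, where a
domino hanging over the last row of the board still occupies vertices. -/
def gridGraphEmbedding (m n : ℕ) : gridGraph m n ↪g hasse (ℕ × ℕ) where
  toFun c := (c.1, c.2)
  inj' := by rintro ⟨a, b⟩ ⟨c, d⟩; simp [Fin.ext_iff]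
  map_rel_iff' := by
    rintro ⟨a, b⟩ ⟨c, d⟩
    change (hasse (ℕ × ℕ)).Adj (a.val, b.val) (c.val, d.val) ↔ (gridGraph m n).Adj (a, b) (c, d)
    simp only [hasse_nat_prod_adj, gridGraph, fromRel_adj, ne_eq, Prod.mk.injEq, Fin.ext_iff]
    omega

theorem range_gridGraphEmbedding (m n : ℕ) :
    Set.range (gridGraphEmbedding m n) = Set.Iio m ×ˢ Set.Iio n := by
  ext ⟨i, j⟩
  constructor
  · rintro ⟨⟨a, b⟩, h⟩
    cases h
    exact ⟨a.isLt, b.isLt⟩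
  · rintro ⟨hi, hj⟩
    exact ⟨(⟨i, hi⟩, ⟨j, hj⟩), rfl⟩

end Grid

section Profile

variable {m n i : ℕ} {p s : List Bool}

/-- The cells covered once the tiling of an `n`-column board has reached row `i`, column `p.length`:
all cells above and to the left, the cells of row `i` marked by `s` from that column on, and the
cells of row `i + 1` marked by `p`, whose dominoes hang over from row `i`. -/
def profileCells (n i : ℕ) (p s : List Bool) : Set (ℕ × ℕ) :=
  {c | c.1 < i ∧ c.2 < n ∨
    c.1 = i ∧ (p.length ≤ c.2 → s[c.2 - p.length]? = some true) ∨
    c.1 = i + 1 ∧ p[c.2]? = some true}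

theorem profileCells_nil (hp : p.length = n) :
    profileCells n i p [] = profileCells n (i + 1) [] p := by
  ext ⟨a, b⟩
  simp only [profileCells, Set.mem_ofPred_eq]
  grind

theorem profileCells_true_cons :
    profileCells n i p (true :: s) = profileCells n i (p ++ [false]) s := by
  ext ⟨a, b⟩
  simp only [profileCells, Set.mem_ofPred_eq]
  grind

theorem insert_profileCells_false_cons :
    insert (i, p.length) (profileCells n i p (false :: s)) = profileCells n i (p ++ [false]) s := by
  ext ⟨a, b⟩
  simp only [profileCells, Set.mem_ofPred_eq, Set.mem_insert_iff, Prod.mk.injEq]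
  grind

theorem insert_profileCells_append_false :
    insert (i + 1, p.length) (profileCells n i (p ++ [false]) s) =
      profileCells n i (p ++ [true]) s := by
  ext ⟨a, b⟩
  simp only [profileCells, Set.mem_ofPred_eq, Set.mem_insert_iff, Prod.mk.injEq]
  grind

theorem insert_profileCells_false_false_cons :
    insert (i, p.length + 1) (profileCells n i p (false :: false :: s)) =
      profileCells n i p (false :: true :: s) := by
  ext ⟨a, b⟩
  simp only [profileCells, Set.mem_ofPred_eq, Set.mem_insert_iff, Prod.mk.injEq]
  grind

theorem profileCells_zero_replicate_false : profileCells n 0 [] (List.replicate n false) = ∅ := by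
  ext ⟨a, b⟩
  simp only [profileCells, Set.mem_ofPred_eq, Set.mem_empty_iff_false]
  grind

theorem profileCells_nil_of_true_notMem (hs : true ∉ s) :
    profileCells n i [] s = Set.Iio i ×ˢ Set.Iio n := by
  ext ⟨a, b⟩
  simp only [profileCells, Set.mem_ofPred_eq, Set.mem_prod, Set.mem_Iio]
  grind

theorem not_profileCells_subset_of_true_mem (hs : true ∈ s) :
    ¬profileCells n i [] s ⊆ Set.Iio i ×ˢ Set.Iio n := by
  obtain ⟨j, hj, hsj⟩ := List.getElem_of_mem hs
  intro hsub
  have : (i, j) ∈ profileCells n i [] s := by simp [profileCells, hj, hsj]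
  exact lt_irrefl i (hsub this).1

/-- The number of ways to complete the profile `p`, `s` of row `i` to a tiling of the `m × n`
board. -/
noncomputable def numProfileCompletions (m n i : ℕ) (p s : List Bool) : ℕ :=
  numCompletions (hasse (ℕ × ℕ)) (Set.Iio m ×ˢ Set.Iio n) (profileCells n i p s)

theorem numProfileCompletions_false_cons_eq_sum (hi : i < m) (hp : p.length < n)
    {N : Finset (ℕ × ℕ)}
    (hN : ∀ u, u ∈ N ↔ (hasse (ℕ × ℕ)).Adj (i, p.length) u ∧ u ∉ profileCells n i p (false :: s)) :
    numProfileCompletions m n i p (false :: s) =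
      ∑ u ∈ N, numCompletions (hasse (ℕ × ℕ)) (Set.Iio m ×ˢ Set.Iio n)
        (insert (i, p.length) (insert u (profileCells n i p (false :: s)))) :=
  numCompletions_eq_sum ((Set.finite_Iio m).prod (Set.finite_Iio n)) (Set.mk_mem_prod hi hp)
    (by simp [profileCells]) hN

theorem numProfileCompletions_false_true_cons (hi : i < m) (hp : p.length < n) :
    numProfileCompletions m n i p (false :: true :: s) =
      numProfileCompletions m n i (p ++ [true]) (true :: s) := by
  have hfree (u) : u ∈ ({(i + 1, p.length)} : Finset (ℕ × ℕ)) ↔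
      (hasse (ℕ × ℕ)).Adj (i, p.length) u ∧ u ∉ profileCells n i p (false :: true :: s) := by
    rcases u with ⟨a, b⟩
    simp only [Finset.mem_singleton, hasse_nat_prod_adj, profileCells, Set.mem_ofPred_eq,
      Prod.mk.injEq]
    grind
  rw [numProfileCompletions_false_cons_eq_sum hi hp hfree, Finset.sum_singleton, Set.insert_comm,
    insert_profileCells_false_cons, insert_profileCells_append_false, numProfileCompletions]

theorem numProfileCompletions_false_cons_of_head_ne_true (hi : i < m) (hp : p.length < n)
    (hs : s.head? ≠ some true) :
    numProfileCompletions m n i p (false :: s) =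
      numProfileCompletions m n i (p ++ [true]) s +
        numCompletions (hasse (ℕ × ℕ)) (Set.Iio m ×ˢ Set.Iio n)
          (insert (i, p.length) (insert (i, p.length + 1) (profileCells n i p (false :: s)))) := by
  have hfree (u) : u ∈ ({(i + 1, p.length), (i, p.length + 1)} : Finset (ℕ × ℕ)) ↔
      (hasse (ℕ × ℕ)).Adj (i, p.length) u ∧ u ∉ profileCells n i p (false :: s) := by
    rcases u with ⟨a, b⟩
    rw [List.head?_eq_getElem?] at hs
    simp only [Finset.mem_insert, Finset.mem_singleton, hasse_nat_prod_adj, profileCells,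
      Set.mem_ofPred_eq, Prod.mk.injEq]
    grind
  rw [numProfileCompletions_false_cons_eq_sum hi hp hfree, Finset.sum_pair (by simp),
    Set.insert_comm, insert_profileCells_false_cons, insert_profileCells_append_false,
    numProfileCompletions]

theorem numProfileCompletions_singleton_false (hi : i < m) (hp : p.length + 1 = n) :
    numProfileCompletions m n i p [false] = numProfileCompletions m n i (p ++ [true]) [] := by
  rw [numProfileCompletions_false_cons_of_head_ne_true hi (by omega) (by simp),
    numCompletions_eq_zero_of_not_subset, Nat.add_zero]
  intro hsub
  have hright : (i, p.length + 1) ∈ Set.Iio m ×ˢ Set.Iio n := hsub (by simp)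
  exact hright.2.ne hp

theorem numProfileCompletions_false_false_cons (hi : i < m) (hp : p.length < n) :
    numProfileCompletions m n i p (false :: false :: s) =
      numProfileCompletions m n i (p ++ [true]) (false :: s) +
        numProfileCompletions m n i (p ++ [false, false]) s := by
  rw [numProfileCompletions_false_cons_of_head_ne_true hi hp (by simp),
    insert_profileCells_false_false_cons, insert_profileCells_false_cons, profileCells_true_cons,
    List.append_assoc, List.singleton_append, ← numProfileCompletions]

theorem numProfileCompletions_true_cons :
    numProfileCompletions m n i p (true :: s) = numProfileCompletions m n i (p ++ [false]) s := by
  rw [numProfileCompletions, profileCells_true_cons, numProfileCompletions]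

theorem numProfileCompletions_nil (hp : p.length = n) :
    numProfileCompletions m n i p [] = numProfileCompletions m n (i + 1) [] p := by
  rw [numProfileCompletions, profileCells_nil hp, numProfileCompletions]

theorem numProfileCompletions_self :
    numProfileCompletions m n m [] s = if true ∈ s then 0 else 1 := by
  split_ifs with h
  · exact numCompletions_eq_zero_of_not_subset (not_profileCells_subset_of_true_mem h)
  · rw [numProfileCompletions, profileCells_nil_of_true_notMem h, numCompletions_self]

/-- The transfer operator of one row. When `f` counts the completions of the profiles of the next
row, `rowTransfer f p s` counts those of the current row, whose columns are processed from the left: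
`s` marks the covered cells among the remaining columns and `p` is the part of the next profile that
the processed columns have determined. -/
def rowTransfer (f : List Bool → ℕ) : List Bool → List Bool → ℕ
  | p, [] => f p
  | p, true :: s => rowTransfer f (p ++ [false]) s
  | p, [false] => f (p ++ [true])
  | p, false :: true :: s => rowTransfer f (p ++ [true]) (true :: s)
  | p, false :: false :: s =>
    rowTransfer f (p ++ [true]) (false :: s) + rowTransfer f (p ++ [false, false]) s

theorem rowTransfer_congr {f g : List Bool → ℕ} {p s : List Bool}
    (hfg : ∀ q : List Bool, q.length = p.length + s.length → f q = g q) :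
    rowTransfer f p s = rowTransfer g p s := by
  fun_induction rowTransfer f p s <;> grind [rowTransfer]

theorem numProfileCompletions_eq_rowTransfer (hi : i < m) (hps : p.length + s.length = n) :
    numProfileCompletions m n i p s = rowTransfer (numProfileCompletions m n (i + 1) []) p s := by
  fun_induction rowTransfer (numProfileCompletions m n (i + 1) []) p s with
  | case1 p => exact numProfileCompletions_nil hps
  | case2 p s ih => rw [numProfileCompletions_true_cons, ih (by grind)]
  | case3 p =>
    rw [numProfileCompletions_singleton_false hi hps, numProfileCompletions_nil (by grind)]
  | case4 p s ih => rw [numProfileCompletions_false_true_cons hi (by grind), ih (by grind)]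
  | case5 p s ihv ihh =>
    rw [numProfileCompletions_false_false_cons hi (by grind), ihv (by grind), ihh (by grind)]

theorem numProfileCompletions_eq_rowTransfer_iterate (k : ℕ) (hk : i + k = m) (hs : s.length = n) :
    numProfileCompletions m n i [] s =
      (rowTransfer · [])^[k] (fun q => if true ∈ q then 0 else 1) s := by
  induction k generalizing i s with
  | zero => rw [← hk, Nat.add_zero, numProfileCompletions_self, Function.iterate_zero, id]
  | succ k ih =>
    rw [numProfileCompletions_eq_rowTransfer (by omega) (by simpa using hs),
      Function.iterate_succ_apply']
    exact rowTransfer_congr fun q hq => ih (by omega) (by simpa [hs] using hq)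

-- The iteration starts from the condition that no domino hangs over below the last row.
theorem numPerfectMatchings_gridGraph (m n : ℕ) :
    numPerfectMatchings (gridGraph m n) =
      (rowTransfer · [])^[m] (fun q => if true ∈ q then 0 else 1) (List.replicate n false) := by
  rw [numPerfectMatchings_eq_numCompletions_range (gridGraphEmbedding m n),
    range_gridGraphEmbedding, ← profileCells_zero_replicate_false, ← numProfileCompletions,
    numProfileCompletions_eq_rowTransfer_iterate m (Nat.zero_add m) List.length_replicate]

end Profile

/-- The number of domino tilings of an 8-by-8 checkerboard (perfect matchings
of the 8-by-8 grid graph) is 12988816 = 3604². -/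
theorem numPerfectMatchings_eight_by_eight :
    numPerfectMatchings (gridGraph 8 8) = 12988816 ∧ 12988816 = 3604 ^ 2 := by
  refine ⟨?_, by norm_num⟩
  rw [numPerfectMatchings_gridGraph]
  -- Feasible because the kernel caches evaluations: each row contributes at most `2 ^ 8` profiles.
  decide +kernel
end

section
/- Let m and n be positive integers each divisible by 4, let D_m^+ and D_n^+ be the circulant matrices with (x,y)-entry 1 if the indices differ by ±1 modulo m (respectively modulo n) and 0 otherwise, and let I_m, I_n be identity matrices. Then det(D_m^+ ⊗ I_n + i·(I_m ⊗ D_n^+)) = 0, where ⊗ denotes the Kronecker product and i is the imaginary unit. -/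
open Matrix Kronecker

/-- The m-by-m circulant matrix D_m^+ with (x,y)-entry 1 if the indices differ
by ±1 modulo m, and 0 otherwise (adjacency matrix of the cycle graph on m
vertices). -/
def cycleMatrix (m : ℕ) : Matrix (Fin m) (Fin m) ℂ :=
  fun x y => if y.val = (x.val + 1) % m ∨ x.val = (y.val + 1) % m then 1 else 0

/-!
For `m > 2`, a root of unity `ζ` with `ζ ^ m = 1` gives the eigenvector `x ↦ ζ ^ x` of the cycle
matrix, with eigenvalue `ζ + ζ⁻¹`. When `4 ∣ m` one may take `ζ = i`, whose eigenvalue is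
`i + i⁻¹ = 0`, so both cycle matrices are singular. If `A v = 0` and `B w = 0`, then `v ⊗ w` is
killed by `A ⊗ I + c (I ⊗ B)` for every scalar `c`.
-/

theorem det_kronecker_one_add_smul_one_kronecker_eq_zero {R ι κ : Type*} [CommRing R] [IsDomain R]
    [Fintype ι] [DecidableEq ι] [Fintype κ] [DecidableEq κ] {A : Matrix ι ι R} {B : Matrix κ κ R}
    (hA : A.det = 0) (hB : B.det = 0) (c : R) :
    (A ⊗ₖ (1 : Matrix κ κ R) + c • ((1 : Matrix ι ι R) ⊗ₖ B)).det = 0 := by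
  obtain ⟨v, hv, hAv⟩ := exists_mulVec_eq_zero_iff.mpr hA
  obtain ⟨w, hw, hBw⟩ := exists_mulVec_eq_zero_iff.mpr hB
  -- `vec` stacks columns, so `v ⊗ w` is the vectorization of `w vᵀ`.
  refine exists_mulVec_eq_zero_iff.mp ⟨vec (vecMulVec w v), ?_, ?_⟩
  · obtain ⟨i, hi⟩ := Function.ne_iff.mp hv
    obtain ⟨j, hj⟩ := Function.ne_iff.mp hw
    exact Function.ne_iff.mpr ⟨(i, j), mul_ne_zero hj hi⟩
  · have left_term : (A ⊗ₖ (1 : Matrix κ κ R)) *ᵥ vec (vecMulVec w v) = 0 := by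
      -- `vecMulVec_zero` covers square matrices only.
      have vecMulVec_w_zero : vecMulVec w (0 : ι → R) = 0 := ext fun _ _ => mul_zero _
      rw [kronecker_mulVec_vec, Matrix.one_mul, vecMulVec_mul, vecMul_transpose, hAv,
        vecMulVec_w_zero, vec_zero]
    have right_term : ((1 : Matrix ι ι R) ⊗ₖ B) *ᵥ vec (vecMulVec w v) = 0 := by
      rw [← vec_mul_eq_mulVec, mul_vecMulVec, hBw, zero_vecMulVec, vec_zero]
    rw [add_mulVec, smul_mulVec, left_term, right_term, smul_zero, add_zero]

theorem cycleMatrix_apply {m : ℕ} [NeZero m] (x y : Fin m) :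
    cycleMatrix m x y = if y = x + 1 ∨ y = x - 1 then 1 else 0 := by
  simp only [cycleMatrix, eq_sub_iff_add_eq, eq_comm (a := y + 1), Fin.ext_iff, Fin.val_add,
    Fin.val_one', Nat.add_mod_mod]

theorem cycleMatrix_mulVec_apply {m : ℕ} [NeZero m] (hm : 2 < m) (v : Fin m → ℂ) (x : Fin m) :
    (cycleMatrix m *ᵥ v) x = v (x + 1) + v (x - 1) := by
  have succ_ne_pred : x + 1 ≠ x - 1 := by
    rw [Ne, eq_sub_iff_add_eq, add_assoc, add_eq_left, Fin.ext_iff, Fin.val_add, Fin.val_one',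
      Nat.mod_eq_of_lt (by lia : 1 < m), Nat.mod_eq_of_lt hm, Fin.val_zero]
    decide
  have neighbors : ({y | y = x + 1 ∨ y = x - 1} : Finset (Fin m)) = {x + 1, x - 1} := by
    ext y
    simp only [Finset.mem_filter_univ, Finset.mem_insert, Finset.mem_singleton]
  simp only [mulVec, dotProduct, cycleMatrix_apply, ite_mul, one_mul, zero_mul]
  rw [← Finset.sum_filter, neighbors, Finset.sum_pair succ_ne_pred]

theorem pow_val_add_one_of_pow_eq_one {M : Type*} [Monoid M] {m : ℕ} [NeZero m] {ζ : M}
    (hζ : ζ ^ m = 1) (x : Fin m) : ζ ^ (x + 1).val = ζ ^ x.val * ζ := by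
  rw [Fin.val_add, Fin.val_one', Nat.add_mod_mod, ← pow_eq_pow_mod _ hζ, pow_succ]

theorem cycleMatrix_mulVec_pow {m : ℕ} (hm : 2 < m) {ζ : ℂ} (hζ : ζ ^ m = 1) :
    (cycleMatrix m *ᵥ fun x => ζ ^ x.val) = (ζ + ζ⁻¹) • fun x : Fin m => ζ ^ x.val := by
  have : NeZero m := ⟨by lia⟩
  have hζ0 : ζ ≠ 0 := (IsUnit.of_pow_eq_one hζ (NeZero.ne m)).ne_zero
  ext x
  have pow_pred : ζ ^ (x - 1).val = ζ ^ x.val * ζ⁻¹ := by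
    rw [eq_mul_inv_iff_mul_eq₀ hζ0, ← pow_val_add_one_of_pow_eq_one hζ, sub_add_cancel]
  rw [cycleMatrix_mulVec_apply hm, pow_val_add_one_of_pow_eq_one hζ, pow_pred, Pi.smul_apply,
    smul_eq_mul]
  ring

theorem det_cycleMatrix_eq_zero {m : ℕ} (hm : 0 < m) (hm4 : 4 ∣ m) : (cycleMatrix m).det = 0 := by
  have I_pow : Complex.I ^ m = 1 := by
    obtain ⟨k, rfl⟩ := hm4
    rw [pow_mul, Complex.I_pow_four, one_pow]
  refine exists_mulVec_eq_zero_iff.mp ⟨fun x => Complex.I ^ x.val, ?_, ?_⟩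
  · exact Function.ne_iff.mpr ⟨⟨0, hm⟩, pow_ne_zero _ Complex.I_ne_zero⟩
  · have two_lt : 2 < m := by have := Nat.le_of_dvd hm hm4; lia
    rw [cycleMatrix_mulVec_pow two_lt I_pow, Complex.inv_I, add_neg_cancel, zero_smul]

theorem det_kronecker_cycle_eq_zero_general {m n : ℕ} (hm : 0 < m) (hn : 0 < n) (hm4 : 4 ∣ m)
    (hn4 : 4 ∣ n) (c : ℂ) :
    (cycleMatrix m ⊗ₖ (1 : Matrix (Fin n) (Fin n) ℂ) +
        c • ((1 : Matrix (Fin m) (Fin m) ℂ) ⊗ₖ cycleMatrix n)).det = 0 :=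
  det_kronecker_one_add_smul_one_kronecker_eq_zero
    (det_cycleMatrix_eq_zero hm hm4) (det_cycleMatrix_eq_zero hn hn4) c

/-- For m, n positive and divisible by 4, the Kasteleyn-weighted adjacency
matrix D_m^+ ⊗ I_n + i (I_m ⊗ D_n^+) of the m-by-n toroidal grid has
determinant zero. -/
theorem det_kronecker_cycle_eq_zero (m n : ℕ) (hm : 0 < m) (hn : 0 < n)
    (hm4 : 4 ∣ m) (hn4 : 4 ∣ n) :
    (cycleMatrix m ⊗ₖ (1 : Matrix (Fin n) (Fin n) ℂ) +
        Complex.I • ((1 : Matrix (Fin m) (Fin m) ℂ) ⊗ₖ cycleMatrix n)).det = 0 := by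
  exact det_kronecker_cycle_eq_zero_general hm hn hm4 hn4 Complex.I
end

section
/- Let f be a real-valued function of two positive-integer arguments such that (i) f is monotone nondecreasing in each argument, and (ii) f is subadditive in each argument, i.e., f(m₁ + m₂, n) ≤ f(m₁, n) + f(m₂, n) and f(m, n₁ + n₂) ≤ f(m, n₁) + f(m, n₂) for all positive integers m, m₁, m₂, n, n₁, n₂. Let α = sup over (m₀, n₀) of the infimum of f(m,n)/(mn) over all m ≥ m₀ and n ≥ n₀. Then f(m,n)/(mn) ≥ α for all positive integers m, n, and f(m,n)/(mn) converges to α as min(m,n) → ∞; in particular α equals the infimum of f(m,n)/(mn) over all positive integers m, n. -/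
/-!
Division with remainder, `m = q * a + r` and `n = q' * b + s` with `1 ≤ r ≤ a` and `1 ≤ s ≤ b`,
cuts an `m × n` box into `q * q'` boxes of size `a × b` and a boundary layer. Separate subadditivity
bounds the contribution of the layer by a multiple of `m + n`, which is negligible against `m * n`.
Hence the upper limit of `f m n / (m * n)` is at most each of its values, and so at most its
infimum.
-/

open Filter Set Topology

theorem le_nsmul_add_of_subadditive {E : Type*} [AddCommMonoid E] [Preorder E] [AddLeftMono E]
    {g : ℕ+ → E} (hg : ∀ m n, g (m + n) ≤ g m + g n) {k : ℕ} {a r m : ℕ+}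
    (hm : k * a + r = (m : ℕ)) : g m ≤ k • g a + g r := by
  induction k generalizing m with
  | zero =>
    obtain rfl : r = m := PNat.eq (by simpa using hm)
    simp
  | succ k ih =>
    let m' : ℕ+ := ⟨k * a + r, by positivity⟩
    have hsplit : m = a + m' := PNat.eq (by rw [PNat.add_coe, PNat.mk_coe, ← hm]; ring)
    calc g m = g (a + m') := by rw [hsplit]
      _ ≤ g a + g m' := hg a m'
      _ ≤ g a + (k • g a + g r) := by gcongr; exact ih rfl
      _ = (k + 1) • g a + g r := by rw [succ_nsmul', add_assoc]

theorem nonneg_of_monotone_of_subadditive {E : Type*} [AddZeroClass E] [Preorder E]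
    [AddLeftReflectLE E] {g : ℕ+ → E} (hmono : Monotone g) (hg : ∀ m n, g (m + n) ≤ g m + g n)
    (a : ℕ+) : 0 ≤ g a := by
  have hle : g a + 0 ≤ g a + g a :=
    calc g a + 0 = g a := add_zero _
      _ ≤ g (a + a) := hmono (PNat.lt_add_right a a).le
      _ ≤ g a + g a := hg a a
  exact le_of_add_le_add_left hle

theorem pnat_div_lt_self (m a : ℕ+) : PNat.div m a < (m : ℕ) := by
  calc PNat.div m a < PNat.div m a * a + PNat.mod m a :=
        lt_add_of_le_of_pos (Nat.le_mul_of_pos_right _ a.pos) (PNat.mod m a).pos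
    _ = m := PNat.div_add_mod' m a

theorem iSup_iInf_Ici_eq_iInf {ι R : Type*} [Preorder ι] [IsDirectedOrder ι] [Nonempty ι]
    [ConditionallyCompleteLattice R] [TopologicalSpace R] [ClosedIciTopology R] {u : ι → R}
    (hbdd : BddBelow (range u)) (hu : Tendsto u atTop (𝓝 (⨅ i, u i))) :
    ⨆ p : ι, ⨅ q : Ici p, u q = ⨅ i, u i := by
  have tail_eq (p : ι) : ⨅ q : Ici p, u q = ⨅ i, u i := by
    refine le_antisymm (ge_of_tendsto hu ?_) (le_ciInf fun q ↦ ciInf_le hbdd q)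
    filter_upwards [eventually_ge_atTop p] with q hq
    exact ciInf_le (hbdd.mono (range_comp_subset_range _ u)) (⟨q, hq⟩ : Ici p)
  simp only [tail_eq, ciSup_const]

/-- Subadditivity in each argument with the other one held fixed, the hypothesis of the
two-dimensional Fekete lemma. It is not subadditivity on the additive semigroup `ℕ+ × ℕ+`. -/
structure SeparatelySubadditive (f : ℕ+ → ℕ+ → ℝ) : Prop where
  add_left : ∀ m₁ m₂ n : ℕ+, f (m₁ + m₂) n ≤ f m₁ n + f m₂ n
  add_right : ∀ m n₁ n₂ : ℕ+, f m (n₁ + n₂) ≤ f m n₁ + f m n₂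

/-- The value `f m n` per unit of area of the `m × n` box, whose limit and infimum are compared
in Fekete's lemma. The arguments are paired so that `min m n → ∞` is the filter `atTop`. -/
noncomputable def boxAverage (f : ℕ+ → ℕ+ → ℝ) (p : ℕ+ × ℕ+) : ℝ :=
  f p.1 p.2 / ((p.1 : ℝ) * (p.2 : ℝ))

namespace SeparatelySubadditive

variable {f : ℕ+ → ℕ+ → ℝ}

theorem sub_const_mul_mul (hf : SeparatelySubadditive f) (c : ℝ) :
    SeparatelySubadditive fun m n ↦ f m n - c * (m * n) where
  add_left m₁ m₂ n := by
    push_cast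
    linarith [hf.add_left m₁ m₂ n]
  add_right m n₁ n₂ := by
    push_cast
    linarith [hf.add_right m n₁ n₂]

theorem apply_le_div_mod (hf : SeparatelySubadditive f) (a b m n : ℕ+) :
    f m n ≤ PNat.div m a * (PNat.div n b * f a b + f a (PNat.mod n b)) +
      (PNat.div n b * f (PNat.mod m a) b + f (PNat.mod m a) (PNat.mod n b)) := by
  have split_right (k : ℕ+) : f k n ≤ PNat.div n b * f k b + f k (PNat.mod n b) := by
    simpa only [nsmul_eq_mul] using
      le_nsmul_add_of_subadditive (hf.add_right k) (PNat.div_add_mod' n b)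
  calc f m n ≤ PNat.div m a * f a n + f (PNat.mod m a) n := by
        simpa only [nsmul_eq_mul] using
          le_nsmul_add_of_subadditive (g := (f · n)) (hf.add_left · · n)
            (PNat.div_add_mod' m a)
    _ ≤ _ := by gcongr <;> exact split_right _

theorem exists_le_mul_add_of_nonpos (hf : SeparatelySubadditive f) {a b : ℕ+} (hab : f a b ≤ 0) :
    ∃ C : ℝ, ∀ m n : ℕ+, f m n ≤ C * (m + n) := by
  obtain ⟨C, hC⟩ := ((finite_Iic (a, b)).image fun p ↦ |f p.1 p.2|).bddAbove
  have abs_le {r s : ℕ+} (hr : r ≤ a) (hs : s ≤ b) : |f r s| ≤ C :=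
    hC ⟨(r, s), ⟨hr, hs⟩, rfl⟩
  have le_C {r s : ℕ+} (hr : r ≤ a) (hs : s ≤ b) : f r s ≤ C :=
    (le_abs_self _).trans (abs_le hr hs)
  have C_nonneg : 0 ≤ C := (abs_nonneg _).trans (abs_le le_rfl le_rfl)
  refine ⟨C, fun m n ↦ ?_⟩
  have hr : PNat.mod m a ≤ a := (PNat.mod_le m a).2
  have hs : PNat.mod n b ≤ b := (PNat.mod_le n b).2
  have hqm : (PNat.div m a : ℝ) ≤ m := mod_cast (pnat_div_lt_self m a).le
  have hqn : (PNat.div n b : ℝ) + 1 ≤ n := mod_cast pnat_div_lt_self n b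
  calc f m n ≤ PNat.div m a * (PNat.div n b * f a b + f a (PNat.mod n b)) +
        (PNat.div n b * f (PNat.mod m a) b + f (PNat.mod m a) (PNat.mod n b)) :=
        hf.apply_le_div_mod a b m n
    _ ≤ PNat.div m a * (PNat.div n b * 0 + C) + (PNat.div n b * C + C) := by
        gcongr
        exacts [le_C le_rfl hs, le_C hr le_rfl, le_C hr hs]
    _ = C * (PNat.div m a + (PNat.div n b + 1)) := by ring
    _ ≤ C * (m + n) := mul_le_mul_of_nonneg_left (add_le_add hqm hqn) C_nonneg

theorem exists_le_boxAverage_mul_add (hf : SeparatelySubadditive f) (p : ℕ+ × ℕ+) :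
    ∃ C : ℝ, ∀ m n : ℕ+, f m n ≤ boxAverage f p * (m * n) + C * (m + n) := by
  -- Multiples of `m * n` are additive in each argument: subtract one to make the average at `p` 0.
  have hp : f p.1 p.2 - boxAverage f p * (p.1 * p.2) ≤ 0 := by
    rw [boxAverage, div_mul_cancel₀ _ (by positivity), sub_self]
  obtain ⟨C, hC⟩ := (hf.sub_const_mul_mul (boxAverage f p)).exists_le_mul_add_of_nonpos hp
  exact ⟨C, fun m n ↦ sub_le_iff_le_add'.1 (hC m n)⟩

theorem eventually_boxAverage_lt (hf : SeparatelySubadditive f) {p : ℕ+ × ℕ+} {L : ℝ}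
    (hL : boxAverage f p < L) : ∀ᶠ q in atTop, boxAverage f q < L := by
  obtain ⟨C, hC⟩ := hf.exists_le_boxAverage_mul_add p
  have boxAverage_le (q : ℕ+ × ℕ+) :
      boxAverage f q ≤ boxAverage f p + C * ((q.2 : ℝ)⁻¹ + (q.1 : ℝ)⁻¹) := by
    calc boxAverage f q
        ≤ (boxAverage f p * (q.1 * q.2) + C * (q.1 + q.2)) / (q.1 * q.2) := by
          unfold boxAverage
          gcongr
          exact hC q.1 q.2
      _ = boxAverage f p + C * ((q.2 : ℝ)⁻¹ + (q.1 : ℝ)⁻¹) := by field_simp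
  have inv_tendsto : Tendsto (fun n : ℕ+ ↦ (n : ℝ)⁻¹) atTop (𝓝 0) :=
    tendsto_inv_atTop_nhds_zero_nat.comp tendsto_PNat_val_atTop_atTop
  have bound_tendsto : Tendsto
      (fun q : ℕ+ × ℕ+ ↦ boxAverage f p + C * ((q.2 : ℝ)⁻¹ + (q.1 : ℝ)⁻¹)) atTop
      (𝓝 (boxAverage f p)) := by
    rw [← prod_atTop_atTop_eq]
    simpa only [Function.comp_apply, add_zero, mul_zero] using
      (((inv_tendsto.comp tendsto_snd).add (inv_tendsto.comp tendsto_fst)).const_mul C).const_add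
        (boxAverage f p)
  filter_upwards [bound_tendsto.eventually_lt_const hL] with q hq
  exact (boxAverage_le q).trans_lt hq

theorem tendsto_boxAverage (hf : SeparatelySubadditive f) (hbdd : BddBelow (range (boxAverage f))) :
    Tendsto (boxAverage f) atTop (𝓝 (⨅ p, boxAverage f p)) := by
  refine tendsto_order.2 ⟨fun L hL ↦ .of_forall fun p ↦ hL.trans_le (ciInf_le hbdd p),
    fun L hL ↦ ?_⟩
  obtain ⟨p, hp⟩ := exists_lt_of_ciInf_lt hL
  exact hf.eventually_boxAverage_lt hp

end SeparatelySubadditive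

theorem bddBelow_range_boxAverage_of_nonneg {f : ℕ+ → ℕ+ → ℝ} (hf : ∀ m n, 0 ≤ f m n) :
    BddBelow (range (boxAverage f)) :=
  ⟨0, forall_mem_range.2 fun p ↦ div_nonneg (hf p.1 p.2) (by positivity)⟩

theorem two_dim_fekete_general {f : ℕ+ → ℕ+ → ℝ} (hf : SeparatelySubadditive f)
    (hbdd : BddBelow (range (boxAverage f))) {α : ℝ}
    (hα : α = ⨆ p : ℕ+ × ℕ+, ⨅ q : Ici p, boxAverage f q) :
    (∀ m n : ℕ+, α ≤ boxAverage f (m, n)) ∧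
    (∀ ε > 0, ∃ m₀ n₀ : ℕ+, ∀ m n : ℕ+, m₀ ≤ m → n₀ ≤ n → |boxAverage f (m, n) - α| < ε) ∧
    α = ⨅ p, boxAverage f p := by
  have hlim := hf.tendsto_boxAverage hbdd
  obtain rfl : α = ⨅ p, boxAverage f p := hα.trans (iSup_iInf_Ici_eq_iInf hbdd hlim)
  refine ⟨fun m n ↦ ciInf_le hbdd (m, n), fun ε hε ↦ ?_, rfl⟩
  obtain ⟨⟨m₀, n₀⟩, hclose⟩ := Metric.tendsto_atTop.1 hlim ε hε
  exact ⟨m₀, n₀, fun m n hm hn ↦ hclose (m, n) ⟨hm, hn⟩⟩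

/-- Two-dimensional Fekete lemma: if f, a real-valued function of two
positive-integer arguments, is monotone nondecreasing in each argument and
subadditive in each argument, and
α = sup_{m₀,n₀} inf_{m ≥ m₀, n ≥ n₀} f(m,n)/(mn), then f(m,n)/(mn) ≥ α for
all m, n; f(m,n)/(mn) → α as min(m,n) → ∞; and α = inf_{m,n} f(m,n)/(mn). -/
theorem two_dim_fekete (f : ℕ+ → ℕ+ → ℝ)
    (hmono1 : ∀ m m' n : ℕ+, m ≤ m' → f m n ≤ f m' n)
    (hmono2 : ∀ m n n' : ℕ+, n ≤ n' → f m n ≤ f m n')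
    (hsub1 : ∀ m₁ m₂ n : ℕ+, f (m₁ + m₂) n ≤ f m₁ n + f m₂ n)
    (hsub2 : ∀ m n₁ n₂ : ℕ+, f m (n₁ + n₂) ≤ f m n₁ + f m n₂)
    (α : ℝ)
    (hα : α = ⨆ p : ℕ+ × ℕ+, ⨅ q : {q : ℕ+ × ℕ+ // p.1 ≤ q.1 ∧ p.2 ≤ q.2},
        f q.val.1 q.val.2 / ((q.val.1 : ℝ) * (q.val.2 : ℝ))) :
    (∀ m n : ℕ+, α ≤ f m n / ((m : ℝ) * (n : ℝ))) ∧
    (∀ ε > 0, ∃ m₀ n₀ : ℕ+, ∀ m n : ℕ+, m₀ ≤ m → n₀ ≤ n →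
        |f m n / ((m : ℝ) * (n : ℝ)) - α| < ε) ∧
    α = ⨅ p : ℕ+ × ℕ+, f p.1 p.2 / ((p.1 : ℝ) * (p.2 : ℝ)) := by
  have hnonneg (m n : ℕ+) : 0 ≤ f m n :=
    nonneg_of_monotone_of_subadditive (fun m m' ↦ hmono1 m m' n) (hsub1 · · n) m
  exact two_dim_fekete_general ⟨hsub1, hsub2⟩ (bddBelow_range_boxAverage_of_nonneg hnonneg) hα
end
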